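/- arXiv:1412.1429 — 6 statements merged into one kernel-verified Lean document; each statement's English description precedes it below -/
import Mathlib

section
/- Variational Lemma: Let μ and ν be probability measures on ℝ in convex order and c : ℝ² → ℝ a Borel measurable cost function satisfying c(x,y) ≥ a(x) + b(y) for some a ∈ L¹(μ) and b ∈ L¹(ν). Assume π ∈ 𝓜(μ,ν) minimises π' ↦ ∫ c dπ' over 𝓜(μ,ν) and ∫ c dπ < ∞. Then there exists a Borel set Γ ⊆ ℝ² with π(Γ) = 1 such that for every measure α on ℝ² with finite support contained in Γ and every competitor α' of α, one has ∫ c dα ≤ ∫ c dα'. -/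
open MeasureTheory

noncomputable section

/-- A martingale coupling of `μ` and `ν`. -/
def IsMartingaleCoupling (μ ν : Measure ℝ) (π : Measure (ℝ × ℝ)) : Prop :=
  IsProbabilityMeasure π ∧ π.map Prod.fst = μ ∧ π.map Prod.snd = ν ∧
    ∀ h : ℝ → ℝ, Measurable h → (∃ C, ∀ x, |h x| ≤ C) →
      ∫ p : ℝ × ℝ, h p.1 * (p.2 - p.1) ∂π = 0

/-- `μ` and `ν` are in convex order. -/
def InConvexOrder (μ ν : Measure ℝ) : Prop :=
  ∀ φ : ℝ → ℝ, ConvexOn ℝ Set.univ φ → Integrable φ μ → Integrable φ ν →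
    ∫ x, φ x ∂μ ≤ ∫ x, φ x ∂ν

/-- `α` has finite support contained in `Γ`. -/
def HasFiniteSupportIn (α : Measure (ℝ × ℝ)) (Γ : Set (ℝ × ℝ)) : Prop :=
  ∃ S : Finset (ℝ × ℝ), ↑S ⊆ Γ ∧ α ((↑S : Set (ℝ × ℝ))ᶜ) = 0

/-- `α'` is a competitor of `α`: a finitely supported measure with the same
marginals whose fiberwise barycenters agree with those of `α`. -/
def IsCompetitor (α α' : Measure (ℝ × ℝ)) : Prop :=
  (∃ S : Finset (ℝ × ℝ), α' ((↑S : Set (ℝ × ℝ))ᶜ) = 0) ∧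
  α'.map Prod.fst = α.map Prod.fst ∧
  α'.map Prod.snd = α.map Prod.snd ∧
  ∀ x : ℝ, ∫ p in {p : ℝ × ℝ | p.1 = x}, p.2 ∂α' =
    ∫ p in {p : ℝ × ℝ | p.1 = x}, p.2 ∂α

section helpers
open Filter Topology BoundedContinuousFunction CompactlySupported NNReal ENNReal Set

lemma measure_le_of_bcf {E : Type*} [MetricSpace E] [MeasurableSpace E] [BorelSpace E]
    (μ π : Measure E) [IsFiniteMeasure μ] [IsFiniteMeasure π]
    (H : ∀ f : E →ᵇ ℝ≥0, ∫⁻ x, (f x : ℝ≥0∞) ∂μ ≤ ∫⁻ x, (f x : ℝ≥0∞) ∂π) : μ ≤ π := by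
  have hF : ∀ F : Set E, IsClosed F → μ F ≤ π F := fun F hF =>
    le_of_tendsto_of_tendsto' (HasOuterApproxClosed.tendsto_lintegral_apprSeq hF μ)
      (HasOuterApproxClosed.tendsto_lintegral_apprSeq hF π) (fun n => H _)
  refine Measure.le_iff.2 fun s hs => ?_
  rw [hs.measure_eq_iSup_isClosed_of_ne_top (measure_ne_top μ s)]
  exact iSup_le fun K => iSup_le fun hK => iSup_le fun hKc => (hF K hKc).trans (measure_mono hK)

lemma compact_duality {ι : Type*} [Fintype ι] [Nonempty ι] {C : Type*} [TopologicalSpace C]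
    [CompactSpace C] [T2Space C] [MeasurableSpace C] [BorelSpace C]
    {E : Type*} [MetricSpace E] [MeasurableSpace E] [BorelSpace E]
    (π : Measure E) [IsFiniteMeasure π] (q : ι → C → E) (hq : ∀ i, Continuous (q i))
    (δ : ℝ) (hδ : 0 < δ)
    (H : ∀ h : ι → (E →ᵇ ℝ), (∀ i x, 0 ≤ h i x) → (∀ z, 1 ≤ ∑ i, h i (q i z)) →
      δ ≤ ∑ i, ∫ x, h i x ∂π) :
    ∃ lam : Measure C, IsFiniteMeasure lam ∧ lam ≠ 0 ∧ ∀ i, lam.map (q i) ≤ π := by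
  classical
  have hne : Nonempty C := by
    by_contra hC
    rw [not_nonempty_iff] at hC
    have := H 0 (by simp) (fun z => hC.elim z)
    simp at this
    linarith
  let S : C_c(C, ℝ) → Set ℝ := fun g => {r | ∃ h : ι → (E →ᵇ ℝ), (∀ i x, 0 ≤ h i x) ∧
    (∀ z, g z ≤ ∑ i, h i (q i z)) ∧ r = ∑ i, ∫ x, h i x ∂π}
  have hS0 : ∀ g, ∀ r ∈ S g, 0 ≤ r := by
    rintro g r ⟨h, h0, -, rfl⟩
    exact Finset.sum_nonneg fun i _ => integral_nonneg (h0 i)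
  have hSb : ∀ g, BddBelow (S g) := fun g => ⟨0, fun r hr => hS0 g r hr⟩
  have hSne : ∀ g, (S g).Nonempty := by
    intro g
    obtain ⟨M, hM⟩ := (isCompact_range g.continuous).bddAbove
    refine ⟨_, fun i => BoundedContinuousFunction.const E (max M 0), ?_, ?_, rfl⟩
    · intro i x; simp
    · intro z
      have h1 : g z ≤ M := hM ⟨z, rfl⟩
      have h2 : (1:ℝ) ≤ Fintype.card ι := by exact_mod_cast Fintype.card_pos
      simp
      nlinarith [le_max_left M 0, le_max_right M 0]
  let P : C_c(C, ℝ) → ℝ := fun g => sInf (S g)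
  have hP0 : ∀ g, 0 ≤ P g := fun g => Real.sInf_nonneg (hS0 g)
  have hPle : ∀ g, ∀ r ∈ S g, P g ≤ r := fun g r hr => csInf_le (hSb g) hr
  have hint : ∀ h : E →ᵇ ℝ, Integrable h π := fun h => h.integrable π
  have hPhom' : ∀ c : ℝ, 0 < c → ∀ x, P (c • x) ≤ c * P x := by
    intro c hc x
    rw [← div_le_iff₀' hc]
    refine le_csInf (hSne x) ?_
    rintro r ⟨h, h0, h1, rfl⟩
    rw [div_le_iff₀' hc]
    refine hPle _ _ ⟨fun i => c • h i, ?_, ?_, ?_⟩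
    · intro i x; simp; exact mul_nonneg hc.le (h0 i x)
    · intro z
      simp [← Finset.mul_sum]
      exact mul_le_mul_of_nonneg_left (h1 z) hc.le
    · simp [integral_const_mul, Finset.mul_sum]
  have hPhom : ∀ c : ℝ, 0 < c → ∀ x, P (c • x) = c * P x := by
    intro c hc x
    refine le_antisymm (hPhom' c hc x) ?_
    have := hPhom' c⁻¹ (inv_pos.2 hc) (c • x)
    rw [smul_smul, inv_mul_cancel₀ hc.ne', one_smul] at this
    rwa [inv_mul_eq_div, le_div_iff₀' hc] at this
  have hPadd : ∀ x y, P (x + y) ≤ P x + P y := by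
    intro x y
    rw [← sub_le_iff_le_add]
    refine le_csInf (hSne x) ?_
    rintro r ⟨h, h0, h1, rfl⟩
    rw [sub_le_comm]
    refine le_csInf (hSne y) ?_
    rintro r ⟨k, k0, k1, rfl⟩
    rw [sub_le_iff_le_add']
    refine hPle _ _ ⟨fun i => h i + k i, ?_, ?_, ?_⟩
    · intro i x; simp; exact add_nonneg (h0 i x) (k0 i x)
    · intro z
      simp [Finset.sum_add_distrib]
      exact add_le_add (h1 z) (k1 z)
    · rw [← Finset.sum_add_distrib]
      refine Finset.sum_congr rfl fun i _ => ?_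
      simp
      exact (integral_add (hint (h i)) (hint (k i))).symm
  let one : C_c(C, ℝ) := ⟨⟨fun _ => 1, continuous_const⟩, HasCompactSupport.of_compactSpace _⟩
  have hone : ∀ z, one z = 1 := fun z => rfl
  have hone0 : one ≠ 0 := by
    intro h
    have := DFunLike.congr_fun h hne.some
    rw [hone] at this
    simp at this
  have hP1 : δ ≤ P one := by
    refine le_csInf (hSne _) ?_
    rintro r ⟨h, h0, h1, rfl⟩
    exact H h h0 h1
  obtain ⟨Λ, hΛ1, hΛ⟩ := exists_extension_of_le_sublinear
    (LinearPMap.mkSpanSingleton one (P one) hone0 : C_c(C, ℝ) →ₗ.[ℝ] ℝ) P hPhom hPadd (by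
      rintro ⟨x, hx⟩
      obtain ⟨c, rfl⟩ := Submodule.mem_span_singleton.1 hx
      rw [LinearPMap.mkSpanSingleton'_apply]
      simp only [RingHom.id_apply, smul_eq_mul]
      rcases lt_or_ge 0 c with hc | hc
      · rw [hPhom c hc]
      · exact (mul_nonpos_of_nonpos_of_nonneg hc (hP0 _)).trans (hP0 _))
  have hΛone : δ ≤ Λ one := by
    have := (hΛ1 ⟨one, Submodule.mem_span_singleton_self one⟩).trans
      (LinearPMap.mkSpanSingleton_apply ℝ ℝ hone0 (P one))
    simp only at this
    rw [this]; exact hP1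
  have hΛpos : ∀ g : C_c(C, ℝ), 0 ≤ g → 0 ≤ Λ g := by
    intro g hg
    have h1 := hΛ (-g)
    have h2 : P (-g) ≤ 0 := by
      refine hPle _ _ ⟨0, by simp, ?_, by simp⟩
      intro z
      have : 0 ≤ g z := hg z
      simpa using this
    rw [map_neg] at h1
    linarith
  let L : C_c(C, ℝ) →ₚ[ℝ] ℝ := PositiveLinearMap.mk₀ Λ hΛpos
  have hL : ∀ g, L g = Λ g := fun g => rfl
  have hfinm : IsFiniteMeasure (RealRMK.rieszMeasure L) := by
    have : IsFiniteMeasureOnCompacts (RealRMK.rieszMeasure L) := by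
      unfold RealRMK.rieszMeasure; infer_instance
    infer_instance
  refine ⟨RealRMK.rieszMeasure L, hfinm, ?_, ?_⟩
  · intro h0
    have := RealRMK.integral_rieszMeasure L one
    rw [h0, integral_zero_measure, hL] at this
    linarith
  · intro i
    refine measure_le_of_bcf _ _ fun f => ?_
    let fr : E →ᵇ ℝ := BoundedContinuousFunction.comp _ (LipschitzWith.subtype_val _) f
    have hfr : ∀ x, fr x = f x := fun x => rfl
    let g : C_c(C, ℝ) := ⟨⟨fun z => fr (q i z), fr.continuous.comp (hq i)⟩,
      HasCompactSupport.of_compactSpace _⟩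
    have hg : ∀ z, g z = f (q i z) := fun z => rfl
    have h1 : ∫ z, g z ∂(RealRMK.rieszMeasure L) ≤ ∫ x, fr x ∂π := by
      rw [RealRMK.integral_rieszMeasure, hL]
      refine (hΛ g).trans (hPle _ _ ⟨fun j => if j = i then fr else 0, ?_, ?_, ?_⟩)
      · intro j x
        by_cases hj : j = i
        · simp [hj, hfr]
        · simp [hj]
      · intro z
        rw [Finset.sum_eq_single i]
        · simp [hg, hfr]
        · intro j _ hj; simp [hj]
        · simp
      · rw [Finset.sum_eq_single i]
        · simp
        · intro j _ hj; simp [hj]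
        · simp
    rw [lintegral_map (by fun_prop) (hq i).measurable]
    have hgint : Integrable g (RealRMK.rieszMeasure L) := by
      exact g.continuous.integrable_of_hasCompactSupport g.hasCompactSupport
    have e1 := ofReal_integral_eq_lintegral_ofReal hgint
      (Eventually.of_forall fun z => by rw [hg]; exact (f (q i z)).2)
    have e2 := ofReal_integral_eq_lintegral_ofReal (hint fr)
      (Eventually.of_forall fun z => by rw [hfr]; exact (f z).2)
    simp only [hg, hfr, ENNReal.ofReal_coe_nnreal] at e1 e2
    rw [← e1, ← e2]
    simp only [hg, hfr] at h1
    exact ENNReal.ofReal_le_ofReal h1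

lemma hilbert_inter {H : Type*} [NormedAddCommGroup H] [InnerProductSpace ℝ H] [CompleteSpace H]
    (K : ℕ → Set H) (hK : Antitone K) (hcl : ∀ n, IsClosed (K n)) (hcv : ∀ n, Convex ℝ (K n))
    (r : ℝ) (hr : ∀ n, ∃ x ∈ K n, ‖x‖ ≤ r) : ∃ x ∈ ⋂ n, K n, ‖x‖ ≤ r := by
  have hmin : ∀ n, ∃ x ∈ K n, ‖x‖ ≤ r ∧ ∀ y ∈ K n, ‖x‖ ≤ ‖y‖ := by
    intro n
    obtain ⟨y, hy, hyr⟩ := hr n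
    obtain ⟨v, hv, hv'⟩ := exists_norm_eq_iInf_of_complete_convex ⟨y, hy⟩
      (hcl n).isComplete (hcv n) 0
    have hall : ∀ w ∈ K n, ‖v‖ ≤ ‖w‖ := by
      intro w hw
      simp only [zero_sub, norm_neg] at hv'
      rw [hv']
      exact ciInf_le ⟨0, by rintro _ ⟨w, rfl⟩; exact norm_nonneg _⟩ (⟨w, hw⟩ : K n)
    exact ⟨v, hv, (hall y hy).trans hyr, hall⟩
  choose x hxK hxr hxmin using hmin
  have hmono : Monotone fun n => ‖x n‖ ^ 2 := by
    intro m n hmn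
    exact pow_le_pow_left₀ (norm_nonneg _) (hxmin m _ (hK hmn (hxK n))) 2
  have hbd : BddAbove (range fun n => ‖x n‖ ^ 2) :=
    ⟨r ^ 2, by rintro _ ⟨n, rfl⟩; exact pow_le_pow_left₀ (norm_nonneg _) (hxr n) 2⟩
  have hconv := tendsto_atTop_ciSup hmono hbd
  have hkey : ∀ m n, m ≤ n → ‖x n - x m‖ ^ 2 ≤ 2 * (‖x n‖ ^ 2 - ‖x m‖ ^ 2) := by
    intro m n hmn
    have hmid : (1/2 : ℝ) • x n + (1/2 : ℝ) • x m ∈ K m :=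
      hcv m (hK hmn (hxK n)) (hxK m) (by norm_num) (by norm_num) (by norm_num)
    have h1 := hxmin m _ hmid
    rw [← smul_add, norm_smul] at h1
    have hp := parallelogram_law_with_norm ℝ (x n) (x m)
    norm_num at h1
    have h2 : 2 * ‖x m‖ ≤ ‖x n + x m‖ := by linarith
    nlinarith [norm_nonneg (x m), norm_nonneg (x n + x m)]
  have hcauchy : CauchySeq x := by
    rw [Metric.cauchySeq_iff']
    intro ε hε
    have hc := hconv.cauchySeq
    rw [Metric.cauchySeq_iff'] at hc
    obtain ⟨N, hN⟩ := hc (ε ^ 2 / 2) (by positivity)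
    refine ⟨N, fun n hn => ?_⟩
    have h1 := hN n hn
    rw [Real.dist_eq] at h1
    have h2 := (le_abs_self _).trans_lt h1
    have h3 := hkey N n hn
    rw [dist_eq_norm]
    exact lt_of_pow_lt_pow_left₀ 2 hε.le (by linarith)
  obtain ⟨y, hy⟩ := cauchySeq_tendsto_of_complete hcauchy
  refine ⟨y, mem_iInter.2 fun n => ?_, le_of_tendsto' hy.norm hxr⟩
  refine (hcl n).mem_of_tendsto hy ?_
  filter_upwards [eventually_ge_atTop n] with k hk
  exact hK hk (hxK k)

/-- Elements of `L²` on the disjoint union which cover `A` up to null sets. -/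
def covSet {ι B E : Type*} [Fintype ι] [MeasurableSpace ι] [MeasurableSpace E]
    (ρ : Measure (ι × E)) (q : ι → B → E) (A : Set B) : Set (Lp ℝ 2 ρ) :=
  {h | ∃ N : Set (ι × E), ρ N = 0 ∧ ∀ s ∈ A, (∀ i, (i, q i s) ∉ N) → 1 ≤ ∑ i, h (i, q i s)}

section cov
variable {ι B E : Type*} [Fintype ι] [MeasurableSpace ι] [MeasurableSpace E]
    (ρ : Measure (ι × E)) (q : ι → B → E)

lemma covSet_anti {A A' : Set B} (h : A ⊆ A') : covSet ρ q A' ⊆ covSet ρ q A := by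
  rintro f ⟨N, hN, hf⟩
  exact ⟨N, hN, fun s hs => hf s (h hs)⟩

lemma covSet_iUnion (A : ℕ → Set B) : ⋂ n, covSet ρ q (A n) ⊆ covSet ρ q (⋃ n, A n) := by
  intro f hf
  rw [mem_iInter] at hf
  choose N hN hf using hf
  refine ⟨⋃ n, N n, measure_iUnion_null hN, fun s hs hsN => ?_⟩
  obtain ⟨n, hn⟩ := mem_iUnion.1 hs
  exact hf n s hn fun i hi => hsN i (mem_iUnion.2 ⟨n, hi⟩)

lemma covSet_convex (A : Set B) : Convex ℝ (covSet ρ q A) := by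
  rintro f ⟨N, hN, hf⟩ g ⟨M, hM, hg⟩ a b ha hb hab
  have h1 := Lp.coeFn_add (a • f) (b • g)
  have h2 := Lp.coeFn_smul a f
  have h3 := Lp.coeFn_smul b g
  have h4 : ∀ᵐ x ∂ρ, (a • f + b • g : Lp ℝ 2 ρ) x = a * f x + b * g x := by
    filter_upwards [h1, h2, h3] with x h1 h2 h3
    rw [h1, Pi.add_apply, h2, h3]; simp
  refine ⟨N ∪ M ∪ {x | ¬ (a • f + b • g : Lp ℝ 2 ρ) x = a * f x + b * g x},
    measure_union_null (measure_union_null hN hM) h4, fun s hs hsN => ?_⟩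
  simp only [mem_union, not_or, mem_ofPred_eq, not_not] at hsN
  rw [Finset.sum_congr rfl fun i _ => (hsN i).2, Finset.sum_add_distrib, ← Finset.mul_sum,
    ← Finset.mul_sum]
  have e1 := hf s hs fun i => (hsN i).1.1
  have e2 := hg s hs fun i => (hsN i).1.2
  nlinarith

lemma covSet_closed (A : Set B) : IsClosed (covSet ρ q A) := by
  refine IsSeqClosed.isClosed fun f g hf hfg => ?_
  choose N hN hf using hf
  obtain ⟨φ, -, hφ⟩ := (tendstoInMeasure_of_tendsto_Lp hfg).exists_seq_tendsto_ae
  refine ⟨(⋃ n, N n) ∪ {x | ¬ Tendsto (fun i => f (φ i) x) atTop (𝓝 (g x))},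
    measure_union_null (measure_iUnion_null hN) hφ, fun s hs hsN => ?_⟩
  simp only [mem_union, not_or, mem_ofPred_eq, not_not, mem_iUnion, not_exists] at hsN
  refine ge_of_tendsto' (tendsto_finsetSum _ fun i _ => (hsN i).2) fun n => ?_
  exact hf _ s hs fun i => (hsN i).1 _

lemma cov_step (r : ℝ) (A : ℕ → Set B) (hA : Monotone A)
    (h : ∀ f ∈ covSet ρ q (⋃ n, A n), r < ‖f‖) : ∃ n, ∀ f ∈ covSet ρ q (A n), r < ‖f‖ := by
  by_contra hcon
  push Not at hcon
  obtain ⟨x, hx, hxr⟩ := hilbert_inter (fun n => covSet ρ q (A n))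
    (fun m n hmn => covSet_anti ρ q (hA hmn)) (fun n => covSet_closed ρ q _)
    (fun n => covSet_convex ρ q _) r hcon
  exact absurd (h x (covSet_iUnion ρ q A hx)) (not_lt.2 hxr)
end cov

/-- Boxes in Baire space. -/
def boxN (s : ℕ → ℕ) (m : ℕ) : Set (ℕ → ℕ) := {t | ∀ i < m, t i ≤ s i}

lemma boxN_subset_open (s : ℕ → ℕ) (U : Set (ℕ → ℕ)) (hU : IsOpen U)
    (h : {t : ℕ → ℕ | ∀ i, t i ≤ s i} ⊆ U) : ∃ m, boxN s m ⊆ U := by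
  by_contra hcon
  simp only [not_exists, Set.not_subset] at hcon
  choose t ht htU using hcon
  have hcomp : IsCompact {t : ℕ → ℕ | ∀ i, t i ≤ s i} := by
    have := isCompact_univ_pi (s := fun i => Iic (s i)) fun i => (finite_Iic (s i)).isCompact
    convert this using 1
    ext t; simp [Pi.le_def]
  obtain ⟨a, ha, φ, hφ, hlim⟩ := hcomp.tendsto_subseq (x := fun m i => min (t m i) (s i))
    (fun m i => min_le_right _ _)
  have hlim2 : Tendsto (fun k => t (φ k)) atTop (𝓝 a) := by
    rw [tendsto_pi_nhds] at hlim ⊢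
    intro i
    refine (hlim i).congr' ?_
    filter_upwards [eventually_gt_atTop i] with k hk
    exact min_eq_left (ht (φ k) i (hk.trans_le (hφ.id_le k)))
  obtain ⟨k, hk⟩ := (hlim2.eventually (hU.mem_nhds (h ha))).exists
  exact htU _ hk

/-- Choquet scheme. -/
lemma exists_boxes {ι E : Type*} [Fintype ι] [MeasurableSpace ι] [MeasurableSpace E]
    (ρ : Measure (ι × E)) (q : ι → (ℕ → ℕ) → E) (r : ℝ)
    (h : ∀ f ∈ covSet ρ q univ, r < ‖f‖) :
    ∃ s : ℕ → ℕ, ∀ m, ∀ f ∈ covSet ρ q (boxN s m), r < ‖f‖ := by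
  let G : Set (ℕ → ℕ) → Prop := fun A => ∀ f ∈ covSet ρ q A, r < ‖f‖
  have step : ∀ (m : ℕ) (A : {A : Set (ℕ → ℕ) // G A}), ∃ k, G (A.1 ∩ {t | t m ≤ k}) := by
    rintro m ⟨A, hA⟩
    refine cov_step ρ q r (fun k => A ∩ {t | t m ≤ k}) ?_ ?_
    · intro k l hkl t ht
      exact ⟨ht.1, ht.2.trans hkl⟩
    · have : ⋃ k, A ∩ {t : ℕ → ℕ | t m ≤ k} = A := by
        ext t; simp
        exact fun _ => ⟨t m, le_rfl⟩
      rw [this]; exact hA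
  choose k hk using step
  let A : ℕ → {A : Set (ℕ → ℕ) // G A} := fun n =>
    Nat.rec ⟨univ, h⟩ (fun m A => ⟨A.1 ∩ {t | t m ≤ k m A}, hk m A⟩) n
  refine ⟨fun m => k m (A m), fun m => ?_⟩
  have : boxN (fun m => k m (A m)) m = (A m).1 := by
    induction m with
    | zero => ext t; simp [boxN, A]
    | succ m ih =>
      have e : (A (m+1)).1 = (A m).1 ∩ {t | t m ≤ k m (A m)} := rfl
      rw [e, ← ih]
      ext t
      simp only [boxN, mem_ofPred_eq, mem_inter_iff]
      constructor
      · exact fun ht => ⟨fun i hi => ht i (by omega), ht m (by omega)⟩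
      · rintro ⟨h1, h2⟩ i hi
        rcases Nat.lt_succ_iff_lt_or_eq.1 hi with h | rfl
        · exact h1 i h
        · exact h2
  rw [this]
  exact (A m).2

lemma norm_sq_toLp {ι E : Type*} [Fintype ι] [MeasurableSpace ι] [MeasurableSingletonClass ι]
    [MeasurableSpace E] (π : Measure E) [IsFiniteMeasure π]
    (h : ι × E → ℝ) (hm : Measurable h) (hb : ∀ x, ‖h x‖ ≤ 2)
    (hL : MemLp h 2 ((Measure.count : Measure ι).prod π)) :
    ‖hL.toLp h‖ ^ 2 = ∑ i, ∫ x, h (i, x) ^ 2 ∂π := by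
  rw [← real_inner_self_eq_norm_sq, L2.inner_def]
  have e1 : ∫ a, inner ℝ ((hL.toLp h) a) ((hL.toLp h) a) ∂((Measure.count : Measure ι).prod π)
      = ∫ a, h a ^ 2 ∂((Measure.count : Measure ι).prod π) := by
    refine integral_congr_ae ?_
    filter_upwards [hL.coeFn_toLp] with a ha
    rw [ha]; simp [sq]
  rw [e1, integral_prod]
  · simp [integral_fintype]
  · refine Integrable.of_bound (C := 4) (hm.pow_const 2).aestronglyMeasurable ?_
    refine Eventually.of_forall fun x => ?_
    rw [norm_pow]
    nlinarith [hb x, norm_nonneg (h x)]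

lemma kellerer {ι : Type*} [Fintype ι] {Z : Type*} [MeasurableSpace Z]
    [StandardBorelSpace Z] {E : Type*} [MetricSpace E] [SecondCountableTopology E]
    [MeasurableSpace E] [BorelSpace E] (π : Measure E) [IsFiniteMeasure π]
    (q : ι → Z → E) (hq : ∀ i, Measurable (q i))
    (hno : ∀ lam : Measure Z, IsFiniteMeasure lam → (∀ i, lam.map (q i) ≤ π) → lam = 0) :
    ∃ N : Set E, MeasurableSet N ∧ π N = 0 ∧ ∀ z, ∃ i, q i z ∈ N := by
  classical
  rcases isEmpty_or_nonempty Z with hZ | hZ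
  · exact ⟨∅, MeasurableSet.empty, by simp, fun z => hZ.elim z⟩
  rcases isEmpty_or_nonempty ι with hι | hι
  · have := hno (Measure.dirac hZ.some) inferInstance (fun i => hι.elim i)
    exact absurd this (IsProbabilityMeasure.ne_zero _)
  obtain ⟨f, hfm, hfs, hfq⟩ : ∃ f : (ℕ → ℕ) → Z, Measurable f ∧ Function.Surjective f ∧
      ∀ i, Continuous (fun s => q i (f s)) := by
    let := upgradeStandardBorel Z
    have hQ : Measurable (fun z i => q i z) := measurable_pi_lambda _ hq
    have key : ∃ f : (ℕ → ℕ) → Z, Continuous f ∧ Function.Surjective f ∧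
        Continuous (fun s i => q i (f s)) := by
      obtain ⟨t', ht', hc, hp⟩ := hQ.exists_continuous
      obtain ⟨f, hf, hfs⟩ := @PolishSpace.exists_nat_nat_continuous_surjective Z t' hp _
      exact ⟨f, continuous_le_rng ht' hf, hfs, hc.comp hf⟩
    obtain ⟨f, hf, hfs, hfc⟩ := key
    exact ⟨f, hf.measurable, hfs, fun i => (continuous_apply i).comp hfc⟩
  let : MeasurableSpace ι := ⊤
  set ρ : Measure (ι × E) := (Measure.count : Measure ι).prod π with hρ
  set q' : ι → (ℕ → ℕ) → E := fun i s => q i (f s) with hq'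
  by_cases h0 : (0 : Lp ℝ 2 ρ) ∈ covSet ρ q' univ
  · obtain ⟨N, hN, hN'⟩ := h0
    have hz : ∀ᵐ x ∂ρ, (0 : Lp ℝ 2 ρ) x = 0 := Lp.coeFn_zero ℝ 2 ρ
    set M : Set (ι × E) := N ∪ {x | ¬ (0 : Lp ℝ 2 ρ) x = 0} with hM
    have hM0 : ρ M = 0 := measure_union_null hN hz
    have hsl : ∀ i, π (Prod.mk i ⁻¹' M) = 0 := by
      have := Measure.measure_ae_null_of_prod_null hM0
      have h2 : ∀ᵐ i ∂(Measure.count : Measure ι), π (Prod.mk i ⁻¹' M) = 0 := this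
      exact Measure.ae_count_iff.1 h2
    refine ⟨⋃ i, toMeasurable π (Prod.mk i ⁻¹' M),
      MeasurableSet.iUnion fun i => measurableSet_toMeasurable _ _, ?_, ?_⟩
    · exact measure_iUnion_null fun i => by rw [measure_toMeasurable]; exact hsl i
    · intro z
      obtain ⟨s, rfl⟩ := hfs z
      by_contra hcon
      push Not at hcon
      have hout : ∀ i, (i, q' i s) ∉ M := fun i hi =>
        hcon i (mem_iUnion.2 ⟨i, subset_toMeasurable _ _ hi⟩)
      simp only [hM, mem_union, not_or, mem_ofPred_eq, not_not] at hout
      have := hN' s (mem_univ _) fun i => (hout i).1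
      rw [Finset.sum_congr rfl fun i _ => (hout i).2] at this
      simp at this
      linarith
  · exfalso
    obtain ⟨r, hr, hball⟩ := Metric.isOpen_iff.1 (covSet_closed ρ q' univ).isOpen_compl 0 h0
    obtain ⟨s, hs⟩ := exists_boxes ρ q' (r / 2) (fun g hg => by
      by_contra hcon
      exact hball (by rw [mem_ball_zero_iff]; linarith) hg)
    have hcomp : IsCompact {t : ℕ → ℕ | ∀ i, t i ≤ s i} := by
      have := isCompact_univ_pi (s := fun i => Iic (s i)) fun i => (finite_Iic (s i)).isCompact
      convert this using 1
      ext t; simp [Pi.le_def]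
    let C := {t : ℕ → ℕ // ∀ i, t i ≤ s i}
    have : CompactSpace C := isCompact_iff_compactSpace.1 hcomp
    obtain ⟨lam, hlf, hl0, hlq⟩ := compact_duality (C := C) π (fun i t => q' i t.1)
      (fun i => (hfq i).comp continuous_subtype_val) ((r / 2) ^ 2 / 4) (by positivity) (by
        intro h h0 h1
        let g : ι × E → ℝ := fun p => 2 * min (h p.1 p.2) 1
        have hgm : Measurable g := measurable_from_prod_countable_right fun i => by
          have := (h i).continuous.measurable
          simp only [g]
          fun_prop
        have hgb : ∀ x, ‖g x‖ ≤ 2 := by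
          intro x
          have : 0 ≤ min (h x.1 x.2) 1 := le_min (h0 _ _) zero_le_one
          rw [Real.norm_of_nonneg (by simp only [g]; positivity)]
          simp only [g]
          linarith [min_le_right (h x.1 x.2) 1]
        have hL : MemLp g 2 ρ := MemLp.of_bound hgm.aestronglyMeasurable 2
          (Eventually.of_forall hgb)
        let U : Set (ℕ → ℕ) := {t | 1 / 2 < ∑ i, min (h i (q' i t)) 1}
        have hU : IsOpen U := by
          refine isOpen_lt continuous_const (continuous_finsetSum _ fun i _ => ?_)
          exact ((h i).continuous.comp (hfq i)).min continuous_const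
        obtain ⟨m, hm⟩ := boxN_subset_open s U hU (by
          intro t ht
          have h2 := h1 ⟨t, ht⟩
          have hnn : ∀ i, 0 ≤ min (h i (q' i t)) 1 := fun i => le_min (h0 _ _) zero_le_one
          simp only [U, mem_ofPred_eq]
          refine lt_of_lt_of_le (by norm_num : (1/2:ℝ) < 1) ?_
          by_cases hbig : ∃ i, 1 ≤ h i (q' i t)
          · obtain ⟨i, hi⟩ := hbig
            have := Finset.single_le_sum (fun j _ => hnn j) (Finset.mem_univ i)
            rwa [min_eq_right hi] at this
          · push Not at hbig
            rw [Finset.sum_congr rfl fun i _ => min_eq_left (hbig i).le]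
            exact h2)
        have hmem : hL.toLp g ∈ covSet ρ q' (boxN s m) := by
          refine ⟨{x | ¬ (hL.toLp g) x = g x}, hL.coeFn_toLp, fun t ht htN => ?_⟩
          simp only [mem_ofPred_eq, not_not] at htN
          rw [Finset.sum_congr rfl fun i _ => htN i]
          have : 1 / 2 < ∑ i, min (h i (q' i t)) 1 := hm ht
          simp only [g, ← Finset.mul_sum]
          linarith
        have h3 := hs m _ hmem
        have h4 := norm_sq_toLp π g hgm hgb hL
        have h5 : (r / 2) ^ 2 ≤ ∑ i, ∫ x, g (i, x) ^ 2 ∂π := by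
          rw [← h4]; exact pow_le_pow_left₀ (by positivity) h3.le 2
        have h6 : ∑ i, ∫ x, g (i, x) ^ 2 ∂π ≤ ∑ i, 4 * ∫ x, h i x ∂π := by
          refine Finset.sum_le_sum fun i _ => ?_
          rw [← integral_const_mul]
          refine integral_mono_of_nonneg (Eventually.of_forall fun x => sq_nonneg _)
            (((h i).integrable π).const_mul 4) (Eventually.of_forall fun x => ?_)
          have a1 : 0 ≤ min (h i x) 1 := le_min (h0 _ _) zero_le_one
          have a2 := min_le_right (h i x) 1
          have a3 := min_le_left (h i x) 1
          simp only [g]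
          nlinarith
        rw [← Finset.mul_sum] at h6
        linarith)
    have hvm : Measurable (fun t : C => f t.1) := hfm.comp measurable_subtype_coe
    have := hno (lam.map (fun t : C => f t.1)) inferInstance (fun i => by
      rw [Measure.map_map (hq i) hvm]
      exact hlq i)
    rw [Measure.map_eq_zero_iff hvm.aemeasurable] at this
    exact hl0 this

/-- Mixture of weighted Dirac masses. -/
def mix {κ Z E : Type*} [Fintype κ] [MeasurableSpace Z] [MeasurableSpace E] (lam : Measure Z)
    (w : κ → Z → ℝ) (e : κ → Z → E) : Measure E :=
  ∑ k, (lam.withDensity fun z => ENNReal.ofReal (w k z)).map (e k)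

section mix
variable {κ Z E : Type*} [Fintype κ] [MeasurableSpace Z] [MeasurableSpace E] (lam : Measure Z)
  [IsFiniteMeasure lam] (w : κ → Z → ℝ) (e : κ → Z → E) (hw : ∀ k, Measurable (w k))
  (he : ∀ k, Measurable (e k)) (R : ℕ) (hw0 : ∀ k z, 0 ≤ w k z) (hwR : ∀ k z, w k z ≤ R)

include hw hw0 hwR in
lemma mix_piece_finite (k : κ) :
    IsFiniteMeasure (lam.withDensity fun z => ENNReal.ofReal (w k z)) := by
  refine isFiniteMeasure_withDensity_ofReal ?_
  refine (Integrable.of_bound (C := R) (hw k).aestronglyMeasurable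
    (Eventually.of_forall fun z => ?_)).2
  rw [Real.norm_of_nonneg (hw0 k z)]
  exact hwR k z

include hw hw0 hwR in
lemma mix_finite : IsFiniteMeasure (mix lam w e) := by
  have := mix_piece_finite lam w hw R hw0 hwR
  unfold mix
  infer_instance

include hw he hw0 hwR in
lemma mix_integral (f : E → ℝ) (hf : Measurable f) (D : ℝ) (hD : ∀ k z, |f (e k z)| ≤ D) :
    Integrable f (mix lam w e) ∧
      ∫ p, f p ∂(mix lam w e) = ∫ z, ∑ k, w k z * f (e k z) ∂lam := by
  have hfin := mix_piece_finite lam w hw R hw0 hwR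
  have h1 : ∀ k, Integrable f
      ((lam.withDensity fun z => ENNReal.ofReal (w k z)).map (e k)) := by
    intro k
    rw [integrable_map_measure hf.aestronglyMeasurable (he k).aemeasurable]
    exact Integrable.of_bound (C := D) (hf.comp (he k)).aestronglyMeasurable
      (Eventually.of_forall fun z => hD k z)
  refine ⟨?_, ?_⟩
  · unfold mix
    exact integrable_finsetSum_measure.2 fun k _ => h1 k
  · unfold mix
    rw [integral_finsetSum_measure fun k _ => h1 k, integral_finsetSum]
    · refine Finset.sum_congr rfl fun k _ => ?_
      rw [integral_map (he k).aemeasurable hf.aestronglyMeasurable,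
        integral_withDensity_eq_integral_toReal_smul (hw k).ennreal_ofReal
          (Eventually.of_forall fun z => ENNReal.ofReal_lt_top)]
      refine integral_congr_ae (Eventually.of_forall fun z => ?_)
      simp [ENNReal.toReal_ofReal (hw0 k z)]
    · intro k _
      refine Integrable.of_bound (C := R * D)
        ((hw k).mul (hf.comp (he k))).aestronglyMeasurable (Eventually.of_forall fun z => ?_)
      rw [norm_mul, Real.norm_of_nonneg (hw0 k z)]
      exact mul_le_mul (hwR k z) (hD k z) (norm_nonneg _) (Nat.cast_nonneg R)

include he hwR in
lemma mix_le (π : Measure E) (ε : ℝ≥0∞) (T : Finset κ) (hT : ∀ k ∉ T, ∀ z, w k z = 0)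
    (hle : ∀ k ∈ T, lam.map (e k) ≤ ε • π) :
    mix lam w e ≤ ((Fintype.card κ * R : ℕ) * ε : ℝ≥0∞) • π := by
  have h1 : ∀ k, (lam.withDensity fun z => ENNReal.ofReal (w k z)).map (e k)
      ≤ ((R : ℝ≥0∞) * ε) • π := by
    intro k
    by_cases hk : k ∈ T
    · refine Measure.le_iff.2 fun s hs => ?_
      rw [Measure.map_apply (he k) hs, withDensity_apply _ ((he k) hs)]
      have h2 := hle k hk s
      rw [Measure.map_apply (he k) hs] at h2
      calc ∫⁻ z in e k ⁻¹' s, ENNReal.ofReal (w k z) ∂lam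
          ≤ ∫⁻ z in e k ⁻¹' s, (R : ℝ≥0∞) ∂lam := by
            refine lintegral_mono fun z => ?_
            rw [← ENNReal.ofReal_natCast]
            exact ENNReal.ofReal_le_ofReal (hwR k z)
        _ = R * lam (e k ⁻¹' s) := by simp
        _ ≤ R * (ε • π) s := by gcongr
        _ = _ := by simp [mul_assoc]
    · have : (fun z => ENNReal.ofReal (w k z)) = 0 := by
        ext z; simp [hT k hk z]
      rw [this, withDensity_zero, Measure.map_zero]
      exact Measure.zero_le _
  unfold mix
  refine Measure.le_iff.2 fun s hs => ?_
  rw [Measure.finsetSum_apply]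
  calc ∑ k, ((lam.withDensity fun z => ENNReal.ofReal (w k z)).map (e k)) s
      ≤ ∑ k : κ, (((R : ℝ≥0∞) * ε) • π) s := Finset.sum_le_sum fun k _ => h1 k s
    _ = _ := by simp [mul_assoc]
end mix

lemma no_measure {I J Z : Type*} [Fintype I] [Fintype J] [MeasurableSpace Z]
    (μ ν : Measure ℝ) (c : ℝ → ℝ → ℝ) (hc : Measurable (fun p : ℝ × ℝ => c p.1 p.2))
    (π : Measure (ℝ × ℝ)) (hπ : IsMartingaleCoupling μ ν π)
    (hfin : Integrable (fun p : ℝ × ℝ => c p.1 p.2) π)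
    (hmin : ∀ π' : Measure (ℝ × ℝ), IsMartingaleCoupling μ ν π' →
      Integrable (fun p : ℝ × ℝ => c p.1 p.2) π' →
      ∫ p : ℝ × ℝ, c p.1 p.2 ∂π ≤ ∫ p : ℝ × ℝ, c p.1 p.2 ∂π')
    (x : I → Z → ℝ) (y : J → Z → ℝ) (w w' : I × J → Z → ℝ)
    (hx : ∀ i, Measurable (x i)) (hy : ∀ i, Measurable (y i)) (hw : ∀ i, Measurable (w i))
    (hw' : ∀ i, Measurable (w' i)) (R : ℕ) (T : Finset (I × J))
    (hw0 : ∀ k z, 0 ≤ w k z) (hwR : ∀ k z, w k z ≤ R)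
    (hw'0 : ∀ k z, 0 ≤ w' k z) (hw'R : ∀ k z, w' k z ≤ R)
    (hxR : ∀ i z, |x i z| ≤ R) (hyR : ∀ j z, |y j z| ≤ R)
    (hcR : ∀ (t : I × J) z, |c (x t.1 z) (y t.2 z)| ≤ R)
    (hT : ∀ t ∉ T, ∀ z, w t z = 0)
    (hm1 : ∀ i z, ∑ j, w' (i, j) z = ∑ j, w (i, j) z)
    (hm2 : ∀ j z, ∑ i, w' (i, j) z = ∑ i, w (i, j) z)
    (hbar : ∀ i z, ∑ j, w' (i, j) z * y j z = ∑ j, w (i, j) z * y j z)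
    (hlt : ∀ z, ∑ t : I × J, w' t z * c (x t.1 z) (y t.2 z) <
      ∑ t : I × J, w t z * c (x t.1 z) (y t.2 z))
    (lam0 : Measure Z) [IsFiniteMeasure lam0]
    (hle : ∀ t ∈ T, lam0.map (fun z => (x t.1 z, y t.2 z)) ≤ π) : lam0 = 0 := by
  by_contra hne
  obtain ⟨hprob, hfst, hsnd, hmart⟩ := hπ
  set n : ℕ := Fintype.card (I × J) * R with hn
  set ε : ℝ≥0∞ := ((n + 1 : ℕ) : ℝ≥0∞)⁻¹ with hε
  have hεtop : ε ≠ ∞ := by simp [hε]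
  have hε0 : ε ≠ 0 := by
    rw [hε]; exact ENNReal.inv_ne_zero.2 (ENNReal.natCast_ne_top _)
  set lam : Measure Z := ε • lam0 with hlam
  have hlamfin : IsFiniteMeasure lam := lam0.smul_finite hεtop
  set e : I × J → Z → ℝ × ℝ := fun t z => (x t.1 z, y t.2 z) with he_def
  have he : ∀ t, Measurable (e t) := fun t => (hx t.1).prodMk (hy t.2)
  have hωπ : mix lam w e ≤ π := by
    refine (mix_le lam w e he R hwR π ε T hT ?_).trans ?_
    · intro k hk
      rw [hlam, Measure.map_smul]
      refine Measure.le_iff.2 fun s hs => ?_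
      rw [Measure.smul_apply, Measure.smul_apply, smul_eq_mul, smul_eq_mul]
      exact mul_le_mul_right (hle k hk s) ε
    · have h1 : ((n : ℕ) * ε : ℝ≥0∞) ≤ 1 := by
        rw [hε, ← div_eq_mul_inv]
        refine ENNReal.div_le_of_le_mul ?_
        rw [one_mul]; exact_mod_cast Nat.le_succ n
      refine Measure.le_iff.2 fun s hs => ?_
      rw [Measure.smul_apply, smul_eq_mul]
      calc _ ≤ 1 * π s := by gcongr
        _ = π s := one_mul _
  set ω := mix lam w e with hω
  set ω' := mix lam w' e with hω'
  have hωf : IsFiniteMeasure ω := mix_finite lam w e hw R hw0 hwR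
  have hω'f : IsFiniteMeasure ω' := mix_finite lam w' e hw' R hw'0 hw'R
  have hI := mix_integral lam w e hw he R hw0 hwR
  have hI' := mix_integral lam w' e hw' he R hw'0 hw'R
  have heq : ∀ f : ℝ × ℝ → ℝ, Measurable f → ∀ D : ℝ, (∀ k z, |f (e k z)| ≤ D) →
      (∀ z, ∑ k, w' k z * f (e k z) = ∑ k, w k z * f (e k z)) →
      ∫ p, f p ∂ω' = ∫ p, f p ∂ω := by
    intro f hf D hD h
    rw [(hI f hf D hD).2, (hI' f hf D hD).2]
    simp only [h]
  have hset : ∀ s : Set (ℝ × ℝ), MeasurableSet s →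
      (∀ z, ∑ k, w' k z * s.indicator 1 (e k z) = ∑ k, w k z * s.indicator 1 (e k z)) →
      ω' s = ω s := by
    intro s hs h
    have h1 := heq (s.indicator 1) (measurable_one.indicator hs) 1 (by
      intro k z
      by_cases hk : e k z ∈ s <;> simp [hk]) h
    rw [integral_indicator_one hs, integral_indicator_one hs] at h1
    exact (ENNReal.toReal_eq_toReal_iff' (measure_ne_top _ _) (measure_ne_top _ _)).1 h1
  have hmap1 : ω'.map Prod.fst = ω.map Prod.fst := by
    ext A hA
    rw [Measure.map_apply measurable_fst hA, Measure.map_apply measurable_fst hA]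
    refine hset _ (measurable_fst hA) fun z => ?_
    have h1 : ∀ k : I × J, (Prod.fst ⁻¹' A).indicator (1 : ℝ × ℝ → ℝ) (e k z) =
      A.indicator 1 (x k.1 z) := fun k => rfl
    simp only [h1, Fintype.sum_prod_type, ← Finset.sum_mul, hm1]
  have hmap2 : ω'.map Prod.snd = ω.map Prod.snd := by
    ext A hA
    rw [Measure.map_apply measurable_snd hA, Measure.map_apply measurable_snd hA]
    refine hset _ (measurable_snd hA) fun z => ?_
    have h1 : ∀ k : I × J, (Prod.snd ⁻¹' A).indicator (1 : ℝ × ℝ → ℝ) (e k z) =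
      A.indicator 1 (y k.2 z) := fun k => rfl
    simp only [h1, Fintype.sum_prod_type_right, ← Finset.sum_mul, hm2]
  set ρ := π - ω with hρ
  have hρω : ρ + ω = π := Measure.sub_add_cancel_of_le hωπ
  have hρfin : IsFiniteMeasure ρ := by rw [hρ]; infer_instance
  have hmar1 : (ρ + ω').map Prod.fst = μ := by
    rw [Measure.map_add _ _ measurable_fst, hmap1, ← Measure.map_add _ _ measurable_fst, hρω, hfst]
  have hmar2 : (ρ + ω').map Prod.snd = ν := by
    rw [Measure.map_add _ _ measurable_snd, hmap2, ← Measure.map_add _ _ measurable_snd, hρω, hsnd]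
  have hcoup : IsMartingaleCoupling μ ν (ρ + ω') := by
    refine ⟨⟨?_⟩, hmar1, hmar2, ?_⟩
    · have h1 : (ρ + ω').map Prod.fst univ = π.map Prod.fst univ := by rw [hmar1, hfst]
      rwa [Measure.map_apply measurable_fst .univ, Measure.map_apply measurable_fst .univ,
        preimage_univ, hprob.measure_univ] at h1
    · intro h hh ⟨D, hD⟩
      set g : ℝ × ℝ → ℝ := fun p => h p.1 * (p.2 - p.1) with hg
      have hgm : Measurable g :=
        (hh.comp measurable_fst).mul (measurable_snd.sub measurable_fst)
      have hgb : ∀ k z, |g (e k z)| ≤ D * (R + R) := by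
        intro k z
        simp only [hg, he_def, abs_mul]
        refine mul_le_mul (hD _) ?_ (abs_nonneg _) ((abs_nonneg _).trans (hD 0))
        refine (abs_sub _ _).trans (add_le_add (hyR _ _) (hxR _ _))
      have hgeq : ∫ p, g p ∂ω' = ∫ p, g p ∂ω := by
        refine heq g hgm _ hgb fun z => ?_
        have h1 : ∀ v : I × J → Z → ℝ, ∑ k, v k z * g (e k z) = ∑ i, (h (x i z) *
            ∑ j, v (i, j) z * y j z - h (x i z) * x i z * ∑ j, v (i, j) z) := by
          intro v
          rw [Fintype.sum_prod_type]
          refine Finset.sum_congr rfl fun i _ => ?_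
          rw [Finset.mul_sum, Finset.mul_sum, ← Finset.sum_sub_distrib]
          refine Finset.sum_congr rfl fun j _ => ?_
          simp only [hg, he_def]
          ring
        rw [h1, h1]
        simp only [hbar, hm1]
      by_cases hint : Integrable g ρ
      · rw [integral_add_measure hint (hI' g hgm _ hgb).1, hgeq,
          ← integral_add_measure hint (hI g hgm _ hgb).1, hρω]
        exact hmart h hh ⟨D, hD⟩
      · refine integral_undef fun hcon => hint ?_
        exact (integrable_add_measure.1 hcon).1
  set cc : ℝ × ℝ → ℝ := fun p => c p.1 p.2 with hcc
  have hcb : ∀ k z, |cc (e k z)| ≤ R := fun k z => hcR k z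
  have hcρ : Integrable cc ρ := by
    rw [← hρω] at hfin
    exact (integrable_add_measure.1 hfin).1
  have hfinal := hmin _ hcoup (hcρ.add_measure (hI' cc hc _ hcb).1)
  rw [integral_add_measure hcρ (hI' cc hc _ hcb).1, ← hρω,
    integral_add_measure hcρ (hI cc hc _ hcb).1, (hI cc hc _ hcb).2, (hI' cc hc _ hcb).2] at hfinal
  have hlamne : lam ≠ 0 := by
    intro h0
    rw [hlam] at h0
    have h1 : lam0 univ = 0 := by
      have : (ε • lam0) univ = 0 := by rw [h0]; simp
      rw [Measure.smul_apply, smul_eq_mul, mul_eq_zero] at this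
      exact this.resolve_left hε0
    exact hne (Measure.measure_univ_eq_zero.1 h1)
  have hsint : ∀ v : I × J → Z → ℝ, (∀ k, Measurable (v k)) → (∀ k z, 0 ≤ v k z) →
      (∀ k z, v k z ≤ R) → Integrable (fun z => ∑ k, v k z * cc (e k z)) lam := by
    intro v hv hv0 hvR
    refine integrable_finsetSum _ fun k _ => ?_
    refine Integrable.of_bound (C := R * R)
        ((hv k).mul (hc.comp (he k))).aestronglyMeasurable (Eventually.of_forall fun z => ?_)
    rw [norm_mul, Real.norm_of_nonneg (hv0 k z)]
    exact mul_le_mul (hvR k z) (hcb k z) (norm_nonneg _) (Nat.cast_nonneg R)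
  have i1 := hsint w hw hw0 hwR
  have i2 := hsint w' hw' hw'0 hw'R
  have hpos : 0 < ∫ z, (∑ k, w k z * cc (e k z)) - ∑ k, w' k z * cc (e k z) ∂lam := by
    rw [integral_pos_iff_support_of_nonneg (fun z => sub_nonneg.2 (hlt z).le) (i1.sub i2)]
    have : Function.support (fun z => (∑ k, w k z * cc (e k z)) - ∑ k, w' k z * cc (e k z))
        = univ := by
      ext z
      simp only [Function.mem_support, mem_univ, iff_true]
      exact (sub_pos.2 (hlt z)).ne'
    rw [this]
    exact pos_iff_ne_zero.2 fun h => hlamne (Measure.measure_univ_eq_zero.1 h)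
  rw [integral_sub i1 i2] at hpos
  linarith

/-- The space of configurations with a strictly better competitor. -/
def zSet (c : ℝ → ℝ → ℝ) (m k : ℕ) (T : Finset (Fin m × Fin k)) (R : ℕ) :
    Set ((Fin m → ℝ) × (Fin k → ℝ) × (Fin m × Fin k → ℝ) × (Fin m × Fin k → ℝ)) :=
  {z | (∀ t, 0 ≤ z.2.2.1 t) ∧ (∀ t, z.2.2.1 t ≤ R) ∧ (∀ t, 0 ≤ z.2.2.2 t) ∧
    (∀ t, z.2.2.2 t ≤ R) ∧ (∀ i, |z.1 i| ≤ R) ∧ (∀ j, |z.2.1 j| ≤ R) ∧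
    (∀ t : Fin m × Fin k, |c (z.1 t.1) (z.2.1 t.2)| ≤ R) ∧ (∀ t, t ∉ T → z.2.2.1 t = 0) ∧
    (∀ i, ∑ j, z.2.2.2 (i, j) = ∑ j, z.2.2.1 (i, j)) ∧
    (∀ j, ∑ i, z.2.2.2 (i, j) = ∑ i, z.2.2.1 (i, j)) ∧
    (∀ i, ∑ j, z.2.2.2 (i, j) * z.2.1 j = ∑ j, z.2.2.1 (i, j) * z.2.1 j) ∧
    ∑ t : Fin m × Fin k, z.2.2.2 t * c (z.1 t.1) (z.2.1 t.2) <
      ∑ t : Fin m × Fin k, z.2.2.1 t * c (z.1 t.1) (z.2.1 t.2)}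

lemma zSet_measurable (c : ℝ → ℝ → ℝ) (hc : Measurable (fun p : ℝ × ℝ => c p.1 p.2)) (m k : ℕ)
    (T : Finset (Fin m × Fin k)) (R : ℕ) : MeasurableSet (zSet c m k T R) := by
  have hct : ∀ t : Fin m × Fin k, Measurable fun z : (Fin m → ℝ) × (Fin k → ℝ) ×
      (Fin m × Fin k → ℝ) × (Fin m × Fin k → ℝ) => c (z.1 t.1) (z.2.1 t.2) := by
    intro t
    have h1 : Measurable fun z : (Fin m → ℝ) × (Fin k → ℝ) ×
      (Fin m × Fin k → ℝ) × (Fin m × Fin k → ℝ) => (z.1 t.1, z.2.1 t.2) := by fun_prop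
    exact hc.comp h1
  unfold zSet
  simp only [setOf_and, setOf_forall]
  refine .inter (.iInter fun t => measurableSet_le (by fun_prop) (by fun_prop)) <|
    .inter (.iInter fun t => measurableSet_le (by fun_prop) (by fun_prop)) <|
    .inter (.iInter fun t => measurableSet_le (by fun_prop) (by fun_prop)) <|
    .inter (.iInter fun t => measurableSet_le (by fun_prop) (by fun_prop)) <|
    .inter (.iInter fun t => measurableSet_le (by fun_prop) (by fun_prop)) <|
    .inter (.iInter fun t => measurableSet_le (by fun_prop) (by fun_prop)) <|
    .inter (.iInter fun t => measurableSet_le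
      (continuous_abs.measurable.comp (hct t)) (by fun_prop)) <|
    .inter (.iInter fun t => .iInter fun ht => measurableSet_eq_fun (by fun_prop) (by fun_prop)) <|
    .inter (.iInter fun t => measurableSet_eq_fun (by fun_prop) (by fun_prop)) <|
    .inter (.iInter fun t => measurableSet_eq_fun (by fun_prop) (by fun_prop)) <|
    .inter (.iInter fun t => measurableSet_eq_fun (by fun_prop) (by fun_prop)) <|
    measurableSet_lt ?_ ?_
  · exact Finset.measurable_sum _ fun t _ => Measurable.mul (by fun_prop) (hct t)
  · exact Finset.measurable_sum _ fun t _ => Measurable.mul (by fun_prop) (hct t)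

lemma integral_fin_support {κ E : Type*} [Fintype κ] [MeasurableSpace E]
    [MeasurableSingletonClass E] (α : Measure E) [IsFiniteMeasure α] (e : κ → E)
    (he : Function.Injective e) (h0 : α (range e)ᶜ = 0) (f : E → ℝ) :
    ∫ p, f p ∂α = ∑ k, α.real {e k} * f (e k) := by
  classical
  have h1 : (range e : Set E) = ((Finset.univ.image e : Finset E) : Set E) := by simp
  have h2 : α.restrict ((Finset.univ.image e : Finset E) : Set E) = α :=
    Measure.restrict_eq_self_of_ae_mem (by rw [← h1]; exact h0)
  conv_lhs => rw [← h2]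
  rw [setIntegral_finset, Finset.sum_image (fun a _ b _ h => he h)]
  · simp
  · exact IntegrableOn.finset

lemma exists_nat_bound {κ : Type*} [Finite κ] (f : κ → ℝ) : ∃ R : ℕ, ∀ k, f k ≤ R := by
  obtain ⟨M, hM⟩ := (Set.finite_range f).bddAbove
  obtain ⟨R, hR⟩ := exists_nat_ge M
  exact ⟨R, fun k => (hM ⟨k, rfl⟩).trans hR⟩

lemma exists_config (c : ℝ → ℝ → ℝ) (Γ : Set (ℝ × ℝ)) (α α' : Measure (ℝ × ℝ))
    [IsFiniteMeasure α] (hα : HasFiniteSupportIn α Γ) (hα' : IsCompetitor α α')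
    (hlt : ∫ p : ℝ × ℝ, c p.1 p.2 ∂α' < ∫ p : ℝ × ℝ, c p.1 p.2 ∂α) :
    ∃ (m k : ℕ) (T : Finset (Fin m × Fin k)) (R : ℕ), ∃ z ∈ zSet c m k T R,
      ∀ t ∈ T, (z.1 t.1, z.2.1 t.2) ∈ Γ := by
  classical
  obtain ⟨S, hSΓ, hS⟩ := hα
  obtain ⟨-, hf, hs, hbar⟩ := hα'
  set X := S.image Prod.fst with hX
  set Y := S.image Prod.snd with hY
  set x : Fin X.card → ℝ := fun i => (X.equivFin.symm i : ℝ) with hx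
  set y : Fin Y.card → ℝ := fun i => (Y.equivFin.symm i : ℝ) with hy
  have hxi : Function.Injective x := Subtype.val_injective.comp X.equivFin.symm.injective
  have hyi : Function.Injective y := Subtype.val_injective.comp Y.equivFin.symm.injective
  have hxX : ∀ a ∈ X, ∃ i, x i = a := fun a ha => ⟨X.equivFin ⟨a, ha⟩, by simp [hx]⟩
  have hyY : ∀ a ∈ Y, ∃ i, y i = a := fun a ha => ⟨Y.equivFin ⟨a, ha⟩, by simp [hy]⟩
  set e : Fin X.card × Fin Y.card → ℝ × ℝ := fun t => (x t.1, y t.2) with he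
  have hei : Function.Injective e := by
    rintro ⟨a, b⟩ ⟨a', b'⟩ h
    simp only [he, Prod.mk.injEq] at h
    rw [hxi h.1, hyi h.2]
  have hfin' : IsFiniteMeasure α' := by
    constructor
    have : α'.map Prod.fst univ = α.map Prod.fst univ := by rw [hf]
    rw [Measure.map_apply measurable_fst .univ, Measure.map_apply measurable_fst .univ,
      preimage_univ] at this
    rw [this]; exact measure_lt_top _ _
  have hαX : α (Prod.fst ⁻¹' ((X : Set ℝ)ᶜ)) = 0 := by
    refine measure_mono_null ?_ hS
    intro p hp hpS
    exact hp (Finset.mem_coe.2 (Finset.mem_image_of_mem _ hpS))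
  have hαY : α (Prod.snd ⁻¹' ((Y : Set ℝ)ᶜ)) = 0 := by
    refine measure_mono_null ?_ hS
    intro p hp hpS
    exact hp (Finset.mem_coe.2 (Finset.mem_image_of_mem _ hpS))
  have hXm : MeasurableSet ((X : Set ℝ)ᶜ) := X.measurableSet.compl
  have hYm : MeasurableSet ((Y : Set ℝ)ᶜ) := Y.measurableSet.compl
  have hα'X : α' (Prod.fst ⁻¹' ((X : Set ℝ)ᶜ)) = 0 := by
    rw [← Measure.map_apply measurable_fst hXm, hf, Measure.map_apply measurable_fst hXm, hαX]
  have hα'Y : α' (Prod.snd ⁻¹' ((Y : Set ℝ)ᶜ)) = 0 := by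
    rw [← Measure.map_apply measurable_snd hYm, hs, Measure.map_apply measurable_snd hYm, hαY]
  have hsub : (range e)ᶜ ⊆ Prod.fst ⁻¹' ((X : Set ℝ)ᶜ) ∪ Prod.snd ⁻¹' ((Y : Set ℝ)ᶜ) := by
    rintro ⟨a, b⟩ hab
    by_contra hcon
    simp only [mem_union, mem_preimage, mem_compl_iff, Finset.mem_coe, not_or, not_not] at hcon
    obtain ⟨i, hi⟩ := hxX a hcon.1
    obtain ⟨j, hj⟩ := hyY b hcon.2
    exact hab ⟨(i, j), by simp [he, hi, hj]⟩
  have hr : α (range e)ᶜ = 0 := measure_mono_null hsub (measure_union_null hαX hαY)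
  have hr' : α' (range e)ᶜ = 0 := measure_mono_null hsub (measure_union_null hα'X hα'Y)
  have hI := integral_fin_support α e hei hr
  have hI' := integral_fin_support α' e hei hr'
  have hrow : ∀ (v : Fin X.card × Fin Y.card → ℝ) (i : Fin X.card) (g : Fin Y.card → ℝ),
      ∑ t : Fin X.card × Fin Y.card, v t * (if x t.1 = x i then g t.2 else 0) =
        ∑ j, v (i, j) * g j := by
    intro v i g
    rw [Fintype.sum_prod_type, Finset.sum_eq_single i]
    · simp
    · intro i' _ hi'
      simp [hxi.ne hi']
    · simp
  have hcol : ∀ (v : Fin X.card × Fin Y.card → ℝ) (j : Fin Y.card),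
      ∑ t : Fin X.card × Fin Y.card, v t * (if y t.2 = y j then 1 else 0) =
        ∑ i, v (i, j) := by
    intro v j
    rw [Fintype.sum_prod_type_right, Finset.sum_eq_single j]
    · simp
    · intro i' _ hi'
      simp [hyi.ne hi']
    · simp
  set w : Fin X.card × Fin Y.card → ℝ := fun t => α.real {e t} with hw
  set w' : Fin X.card × Fin Y.card → ℝ := fun t => α'.real {e t} with hw'
  have hm1 : ∀ i, ∑ j, w' (i, j) = ∑ j, w (i, j) := by
    intro i
    have hmeas : MeasurableSet (Prod.fst ⁻¹' {x i} : Set (ℝ × ℝ)) :=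
      measurable_fst (measurableSet_singleton _)
    have h1 : α'.real (Prod.fst ⁻¹' {x i}) = α.real (Prod.fst ⁻¹' {x i}) := by
      rw [measureReal_def, measureReal_def, ← Measure.map_apply measurable_fst
        (measurableSet_singleton _), hf, Measure.map_apply measurable_fst
        (measurableSet_singleton _)]
    rw [← integral_indicator_one hmeas, ← integral_indicator_one hmeas, hI, hI'] at h1
    have h2 := hrow w i 1
    have h2' := hrow w' i 1
    simp only [Pi.one_apply, mul_one] at h2 h2'
    rw [← h2, ← h2']
    simpa [Set.indicator_apply, he, hw, hw'] using h1
  have hm2 : ∀ j, ∑ i, w' (i, j) = ∑ i, w (i, j) := by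
    intro j
    have hmeas : MeasurableSet (Prod.snd ⁻¹' {y j} : Set (ℝ × ℝ)) :=
      measurable_snd (measurableSet_singleton _)
    have h1 : α'.real (Prod.snd ⁻¹' {y j}) = α.real (Prod.snd ⁻¹' {y j}) := by
      rw [measureReal_def, measureReal_def, ← Measure.map_apply measurable_snd
        (measurableSet_singleton _), hs, Measure.map_apply measurable_snd
        (measurableSet_singleton _)]
    rw [← integral_indicator_one hmeas, ← integral_indicator_one hmeas, hI, hI'] at h1
    rw [← hcol w, ← hcol w']
    simpa [Set.indicator_apply, he, hw, hw'] using h1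
  have hb : ∀ i, ∑ j, w' (i, j) * y j = ∑ j, w (i, j) * y j := by
    intro i
    have h1 := hbar (x i)
    have hmeas : MeasurableSet {p : ℝ × ℝ | p.1 = x i} :=
      measurable_fst (measurableSet_singleton (x i))
    rw [← integral_indicator hmeas, ← integral_indicator hmeas, hI, hI'] at h1
    rw [← hrow w i y, ← hrow w' i y]
    simpa [Set.indicator_apply, he, hw, hw'] using h1
  obtain ⟨R1, hR1⟩ := exists_nat_bound w
  obtain ⟨R2, hR2⟩ := exists_nat_bound w'
  obtain ⟨R3, hR3⟩ := exists_nat_bound fun i => |x i|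
  obtain ⟨R4, hR4⟩ := exists_nat_bound fun i => |y i|
  obtain ⟨R5, hR5⟩ := exists_nat_bound fun t : Fin X.card × Fin Y.card => |c (x t.1) (y t.2)|
  have hbd : ∀ n ∈ [R1, R2, R3, R4, R5], (n : ℝ) ≤ (R1 + R2 + R3 + R4 + R5 : ℕ) := by
    intro n hn
    simp only [List.mem_cons, List.not_mem_nil, or_false] at hn
    exact_mod_cast (by omega)
  refine ⟨X.card, Y.card, Finset.univ.filter fun t => e t ∈ S, R1 + R2 + R3 + R4 + R5,
    (x, y, w, w'), ⟨fun t => measureReal_nonneg, fun t => (hR1 t).trans (hbd _ (by simp)),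
      fun t => measureReal_nonneg, fun t => (hR2 t).trans (hbd _ (by simp)),
      fun t => (hR3 t).trans (hbd _ (by simp)), fun t => (hR4 t).trans (hbd _ (by simp)),
      fun t => (hR5 t).trans (hbd _ (by simp)), ?_, hm1, hm2, hb, ?_⟩, ?_⟩
  · intro t ht
    simp only [Finset.mem_filter, Finset.mem_univ, true_and] at ht
    simp only [hw]
    rw [measureReal_def, measure_mono_null (t := (↑S : Set (ℝ × ℝ))ᶜ) _ hS]
    · simp
    · rintro p hp
      rw [mem_singleton_iff] at hp
      rw [hp]; exact ht
  · rw [hI, hI'] at hlt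
    exact hlt
  · intro t ht
    simp only [Finset.mem_filter, Finset.mem_univ, true_and] at ht
    exact hSΓ ht

end helpers

/-- Variational Lemma: a minimising martingale transport plan with finite cost is
concentrated on a Borel set `Γ` on which no finite rearrangement of mass
(competitor) can decrease the cost. -/
theorem variational_lemma
    (μ ν : Measure ℝ) [IsProbabilityMeasure μ] [IsProbabilityMeasure ν]
    (hconv : InConvexOrder μ ν)
    (c : ℝ → ℝ → ℝ) (hc : Measurable (fun p : ℝ × ℝ => c p.1 p.2))
    (a b : ℝ → ℝ) (ha : Integrable a μ) (hb : Integrable b ν)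
    (hbound : ∀ x y : ℝ, a x + b y ≤ c x y)
    (π : Measure (ℝ × ℝ)) (hπ : IsMartingaleCoupling μ ν π)
    (hfin : Integrable (fun p : ℝ × ℝ => c p.1 p.2) π)
    (hmin : ∀ π' : Measure (ℝ × ℝ), IsMartingaleCoupling μ ν π' →
      Integrable (fun p : ℝ × ℝ => c p.1 p.2) π' →
      ∫ p : ℝ × ℝ, c p.1 p.2 ∂π ≤ ∫ p : ℝ × ℝ, c p.1 p.2 ∂π') :
    ∃ Γ : Set (ℝ × ℝ), MeasurableSet Γ ∧ π Γ = 1 ∧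
      ∀ α : Measure (ℝ × ℝ), IsFiniteMeasure α → HasFiniteSupportIn α Γ →
        ∀ α' : Measure (ℝ × ℝ), IsCompetitor α α' →
          ∫ p : ℝ × ℝ, c p.1 p.2 ∂α ≤ ∫ p : ℝ × ℝ, c p.1 p.2 ∂α' := by
  have hprob := hπ.1
  have key : ∀ (m k : ℕ) (T : Finset (Fin m × Fin k)) (R : ℕ), ∃ N : Set (ℝ × ℝ),
      MeasurableSet N ∧ π N = 0 ∧
        ∀ z ∈ zSet c m k T R, ∃ t ∈ T, (z.1 t.1, z.2.1 t.2) ∈ N := by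
    intro m k T R
    have hsb : StandardBorelSpace (zSet c m k T R) := (zSet_measurable c hc m k T R).standardBorel
    have hx : ∀ i : Fin m, Measurable fun z : zSet c m k T R => z.1.1 i := fun i => by fun_prop
    have hy : ∀ i : Fin k, Measurable fun z : zSet c m k T R => z.1.2.1 i := fun i => by fun_prop
    have hw : ∀ i, Measurable fun z : zSet c m k T R => z.1.2.2.1 i := fun i => by fun_prop
    have hw' : ∀ i, Measurable fun z : zSet c m k T R => z.1.2.2.2 i := fun i => by fun_prop
    obtain ⟨N, hN, hN0, hNz⟩ := kellerer (ι := {t // t ∈ T}) (Z := zSet c m k T R) π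
      (fun t z => (z.1.1 t.1.1, z.1.2.1 t.1.2)) (fun t => (hx _).prodMk (hy _)) (by
        intro lam hlam hle
        refine no_measure μ ν c hc π hπ hfin hmin
          (fun i z => z.1.1 i) (fun j z => z.1.2.1 j) (fun t z => z.1.2.2.1 t)
          (fun t z => z.1.2.2.2 t) hx hy hw hw' R T ?_ ?_ ?_ ?_ ?_ ?_ ?_ ?_ ?_ ?_ ?_ ?_ lam
          (fun t ht => hle ⟨t, ht⟩)
        · exact fun t z => z.2.1 t
        · exact fun t z => z.2.2.1 t
        · exact fun t z => z.2.2.2.1 t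
        · exact fun t z => z.2.2.2.2.1 t
        · exact fun t z => z.2.2.2.2.2.1 t
        · exact fun t z => z.2.2.2.2.2.2.1 t
        · exact fun t z => z.2.2.2.2.2.2.2.1 t
        · exact fun t ht z => z.2.2.2.2.2.2.2.2.1 t ht
        · exact fun t z => z.2.2.2.2.2.2.2.2.2.1 t
        · exact fun t z => z.2.2.2.2.2.2.2.2.2.2.1 t
        · exact fun t z => z.2.2.2.2.2.2.2.2.2.2.2.1 t
        · exact fun z => z.2.2.2.2.2.2.2.2.2.2.2.2)
    refine ⟨N, hN, hN0, fun z hz => ?_⟩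
    obtain ⟨t, ht⟩ := hNz ⟨z, hz⟩
    exact ⟨t.1, t.2, ht⟩
  choose N hNm hN0 hNz using key
  have hUm : MeasurableSet (⋃ m, ⋃ k, ⋃ T, ⋃ R, N m k T R) :=
    .iUnion fun m => .iUnion fun k => .iUnion fun T => .iUnion fun R => hNm m k T R
  refine ⟨(⋃ m, ⋃ k, ⋃ T, ⋃ R, N m k T R)ᶜ, hUm.compl, ?_, ?_⟩
  · rw [prob_compl_eq_one_iff hUm]
    exact measure_iUnion_null fun m => measure_iUnion_null fun k => measure_iUnion_null fun T =>
      measure_iUnion_null fun R => hN0 m k T R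
  · intro α hα hsupp α' hcomp
    by_contra hcon
    push Not at hcon
    obtain ⟨m, k, T, R, z, hz, hzΓ⟩ := exists_config c _ α α' hsupp hcomp hcon
    obtain ⟨t, ht, htN⟩ := hNz m k T R z hz
    refine hzΓ t ht ?_
    simp only [Set.mem_iUnion]
    exact ⟨m, k, T, R, htN⟩
end
end

section
/- Let μ and ν be probability measures on ℝ in convex order and c, c' : ℝ² → ℝ Borel measurable cost functions such that c(x,y) ≥ a(x) + b(y) for some a ∈ L¹(μ), b ∈ L¹(ν) and c'(x,y) ≤ f(x) + g(y) for some f ∈ L¹(μ), g ∈ L¹(ν). Assume π ∈ 𝓜(μ,ν) minimises π' ↦ ∫ c dπ' over 𝓜(μ,ν) with ∫ c dπ < ∞, and among all such minimisers π'' with ∫ c' dπ'' > −∞, π maximises π'' ↦ ∫ c' dπ''. Then there exists a Borel set Γ ⊆ ℝ² with π(Γ) = 1 such that for every measure α on ℝ² with finite support contained in Γ and every competitor α' of α, one has ∫ c dα ≤ ∫ c dα', and ∫ c dα = ∫ c dα' implies ∫ c' dα ≥ ∫ c' dα'. -/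
open MeasureTheory

noncomputable section

namespace Kel

open MeasureTheory Filter Topology

variable {ι Ω Z : Type*} [Fintype ι] [MeasurableSpace Z]

/-- Feasible families of test functions for the set `A`. -/
def Feas (p : ι → Ω → Z) (A : Set Ω) (f : ι → Z → ℝ) : Prop :=
  (∀ i, Measurable (f i)) ∧ (∀ i z, 0 ≤ f i z ∧ f i z ≤ 1) ∧ ∀ e ∈ A, 1 ≤ ∑ i, f i (p i e)

/-- Quadratic energy. -/
def En (ρ : Measure Z) (f : ι → Z → ℝ) : ℝ := ∑ i, ∫ z, (f i z) ^ 2 ∂ρ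

/-- Capacity. -/
def Cap (ρ : Measure Z) (p : ι → Ω → Z) (A : Set Ω) : ℝ := sInf (En ρ '' {f | Feas p A f})

lemma En_nonneg (ρ : Measure Z) (f : ι → Z → ℝ) : 0 ≤ En ρ f :=
  Finset.sum_nonneg fun i _ => integral_nonneg fun z => sq_nonneg _

lemma Cap_bdd (ρ : Measure Z) (p : ι → Ω → Z) (A : Set Ω) :
    BddBelow (En ρ '' {f | Feas p A f}) := by
  refine ⟨0, ?_⟩
  rintro _ ⟨f, _, rfl⟩
  exact En_nonneg ρ f

lemma Cap_le {ρ : Measure Z} {p : ι → Ω → Z} {A : Set Ω} {f : ι → Z → ℝ} (hf : Feas p A f) :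
    Cap ρ p A ≤ En ρ f := csInf_le (Cap_bdd ρ p A) ⟨f, hf, rfl⟩

lemma feas_nonempty [Nonempty ι] (ρ : Measure Z) (p : ι → Ω → Z) (A : Set Ω) :
    (En ρ '' {f | Feas p A f}).Nonempty := by
  refine ⟨_, fun _ _ => 1, ⟨fun i => measurable_const, fun i z => by norm_num, fun e _ => ?_⟩, rfl⟩
  simp only [Finset.sum_const, Finset.card_univ, nsmul_eq_mul, mul_one]
  exact_mod_cast Fintype.card_pos

lemma exists_near [Nonempty ι] (ρ : Measure Z) (p : ι → Ω → Z) (A : Set Ω) {r : ℝ}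
    (hr : Cap ρ p A < r) : ∃ f, Feas p A f ∧ En ρ f < r := by
  obtain ⟨_, ⟨f, hf, rfl⟩, h⟩ := exists_lt_of_csInf_lt (feas_nonempty ρ p A) hr
  exact ⟨f, hf, h⟩

lemma Feas.mono {p : ι → Ω → Z} {A B : Set Ω} {f : ι → Z → ℝ} (h : A ⊆ B) (hf : Feas p B f) :
    Feas p A f := ⟨hf.1, hf.2.1, fun e he => hf.2.2 e (h he)⟩

lemma Cap_mono [Nonempty ι] (ρ : Measure Z) (p : ι → Ω → Z) {A B : Set Ω} (h : A ⊆ B) :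
    Cap ρ p A ≤ Cap ρ p B :=
  csInf_le_csInf (Cap_bdd ρ p A) (feas_nonempty ρ p B)
    (Set.image_mono fun _ hf => Feas.mono h hf)

lemma Feas.avg {p : ι → Ω → Z} {A : Set Ω} {f g : ι → Z → ℝ} (hf : Feas p A f) (hg : Feas p A g) :
    Feas p A (fun i z => (f i z + g i z) / 2) := by
  refine ⟨fun i => ((hf.1 i).add (hg.1 i)).div_const 2, fun i z => ?_, fun e he => ?_⟩
  · have := hf.2.1 i z
    have := hg.2.1 i z
    constructor <;> linarith
  · rw [← Finset.sum_div, Finset.sum_add_distrib]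
    linarith [hf.2.2 e he, hg.2.2 e he]

lemma integrable_bdd {ρ : Measure Z} [IsFiniteMeasure ρ] {φ : Z → ℝ} (h : Measurable φ) (C : ℝ)
    (hb : ∀ z, |φ z| ≤ C) : Integrable φ ρ :=
  Integrable.of_bound h.aestronglyMeasurable C (Eventually.of_forall fun z => by
    simpa using hb z)

lemma En_par {ρ : Measure Z} [IsFiniteMeasure ρ] {p : ι → Ω → Z} {A : Set Ω} {f g : ι → Z → ℝ}
    (hf : Feas p A f) (hg : Feas p A g) :
    4 * En ρ (fun i z => (f i z + g i z) / 2) + En ρ (fun i z => f i z - g i z)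
      = 2 * En ρ f + 2 * En ρ g := by
  unfold En
  simp only [Finset.mul_sum, ← Finset.sum_add_distrib]
  refine Finset.sum_congr rfl fun i _ => ?_
  have mf := hf.1 i
  have mg := hg.1 i
  have bf := hf.2.1 i
  have bg := hg.2.1 i
  have i1 : Integrable (fun z => (f i z) ^ 2) ρ := integrable_bdd (by fun_prop) 1 fun z => by
    rw [abs_of_nonneg (sq_nonneg _)]; nlinarith [bf z]
  have i2 : Integrable (fun z => (g i z) ^ 2) ρ := integrable_bdd (by fun_prop) 1 fun z => by
    rw [abs_of_nonneg (sq_nonneg _)]; nlinarith [bg z]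
  have i3 : Integrable (fun z => ((f i z + g i z) / 2) ^ 2) ρ :=
    integrable_bdd (by fun_prop) 1 fun z => by
      rw [abs_of_nonneg (sq_nonneg _)]; nlinarith [bg z, bf z]
  have i4 : Integrable (fun z => (f i z - g i z) ^ 2) ρ :=
    integrable_bdd (by fun_prop) 1 fun z => by
      rw [abs_of_nonneg (sq_nonneg _)]
      have := bf z; have := bg z
      rw [sq_le_one_iff_abs_le_one, abs_le]; constructor <;> linarith
  rw [← integral_const_mul, ← integral_const_mul, ← integral_const_mul,
    ← integral_add (i3.const_mul 4) i4, ← integral_add (i1.const_mul 2) (i2.const_mul 2)]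
  congr 1; ext z; ring

lemma eLp_lt {ρ : Measure Z} [IsFiniteMeasure ρ] {φ : Z → ℝ} (h : Measurable φ)
    (hb : ∀ z, |φ z| ≤ 1) (N : ℕ) (hN : ∫ z, (φ z) ^ 2 ∂ρ < ((1 / 4 : ℝ)) ^ N) :
    eLpNorm φ 2 ρ < (1 / 2 : ENNReal) ^ N := by
  have hm : MemLp φ 2 ρ := MemLp.of_bound h.aestronglyMeasurable 1 (Eventually.of_forall fun z => by
    simpa using hb z)
  rw [hm.eLpNorm_eq_integral_rpow_norm (by norm_num) (by norm_num)]
  have : (1 / 2 : ENNReal) ^ N = ENNReal.ofReal ((1 / 2 : ℝ) ^ N) := by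
    rw [ENNReal.ofReal_pow (by norm_num)]
    congr 1
    rw [ENNReal.ofReal_div_of_pos (by norm_num)]; simp
  rw [this, ENNReal.ofReal_lt_ofReal_iff (by positivity)]
  simp only [ENNReal.toReal_ofNat, Real.rpow_two, Real.norm_eq_abs, sq_abs]
  rw [show ((2 : ℝ)⁻¹) = 1 / 2 by norm_num, ← Real.sqrt_eq_rpow, Real.sqrt_lt' (by positivity)]
  calc _ < _ := hN
    _ = _ := by rw [← pow_mul, mul_comm, pow_mul]; norm_num

lemma Cap_iUnion [Nonempty ι] (ρ : Measure Z) [IsFiniteMeasure ρ] (p : ι → Ω → Z) (A : ℕ → Set Ω)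
    (hA : Monotone A) (δ : ℝ) (hδ : ∀ m, Cap ρ p (A m) ≤ δ) : Cap ρ p (⋃ m, A m) ≤ δ := by
  set a : ℕ → ℝ := fun m => Cap ρ p (A m) with ha
  have hmono : Monotone a := fun m n h => Cap_mono ρ p (hA h)
  have hbd : BddAbove (Set.range a) := ⟨δ, by rintro _ ⟨m, rfl⟩; exact hδ m⟩
  set L := ⨆ m, a m with hL
  have hlim : Tendsto a atTop (𝓝 L) := tendsto_atTop_ciSup hmono hbd
  have haL : ∀ m, a m ≤ L := fun m => le_ciSup hbd m
  have hLδ : L ≤ δ := ciSup_le hδ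
  let η : ℕ → ℝ := fun N => (1 / 4 : ℝ) ^ N / 16
  have hη : ∀ N, 0 < η N := fun N => by positivity
  have hηmono : ∀ N n, N ≤ n → η n ≤ η N := fun N n h => by
    have : (1 / 4 : ℝ) ^ n ≤ (1 / 4 : ℝ) ^ N := pow_le_pow_of_le_one (by norm_num) (by norm_num) h
    simp only [η]; linarith
  obtain ⟨φ, hφ, hφ2⟩ := extraction_forall_of_eventually' (P := fun N m => L - η N < a m) (fun N => by
    have := hlim.eventually (lt_mem_nhds (show L - η N < L by linarith [hη N]))
    exact eventually_atTop.1 this)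
  choose f hf hfE using fun N => exists_near ρ p (A (φ N)) (r := L + η N)
    (lt_of_le_of_lt (haL (φ N)) (by linarith [hη N]))
  have hdiff : ∀ N n m, N ≤ n → N ≤ m → En ρ (fun i z => f n i z - f m i z) < (1 / 4 : ℝ) ^ N := by
    intro N n m hn hm
    have f1 : Feas p (A (φ N)) (f n) := (hf n).mono (hA (hφ.monotone hn))
    have f2 : Feas p (A (φ N)) (f m) := (hf m).mono (hA (hφ.monotone hm))
    have h1 := Cap_le (ρ := ρ) (f1.avg f2)
    have h2 := En_par (ρ := ρ) f1 f2
    have h3 : L - η N < Cap ρ p (A (φ N)) := hφ2 N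
    have h4 := hfE n
    have h5 := hfE m
    have h6 := hηmono N n hn
    have h7 := hηmono N m hm
    have h8 : (1 / 4 : ℝ) ^ N = 16 * η N := by simp only [η]; ring
    rw [h8]
    linarith [hη N]
  have hconv : ∀ i, ∀ᵐ z ∂ρ, ∃ l, Tendsto (fun n => f n i z) atTop (𝓝 l) := by
    intro i
    refine Lp.ae_tendsto_of_cauchy_eLpNorm (p := 2) (B := fun N => (1 / 2 : ENNReal) ^ N)
      (fun n => ((hf n).1 i).aestronglyMeasurable) (by norm_num) ?_ ?_
    · rw [ENNReal.tsum_geometric]; simp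
    · intro N n m hn hm
      refine eLp_lt (((hf n).1 i).sub ((hf m).1 i)) (fun z => ?_) N ?_
      · have := (hf n).2.1 i z
        have := (hf m).2.1 i z
        simp only [Pi.sub_apply]
        rw [abs_le]; constructor <;> linarith
      · refine lt_of_le_of_lt ?_ (hdiff N n m hn hm)
        exact Finset.single_le_sum (f := fun i => ∫ z, (f n i z - f m i z) ^ 2 ∂ρ)
          (fun i _ => integral_nonneg fun z => sq_nonneg _) (Finset.mem_univ i)
  let g : ι → Z → ℝ := fun i z => limsup (fun n => f n i z) atTop
  have hbdd : ∀ i z, IsBoundedUnder (· ≤ ·) atTop (fun n => f n i z) := fun i z =>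
    isBoundedUnder_of ⟨1, fun n => ((hf n).2.1 i z).2⟩
  have hbdd' : ∀ i z, IsBoundedUnder (· ≥ ·) atTop (fun n => f n i z) := fun i z =>
    isBoundedUnder_of ⟨0, fun n => ((hf n).2.1 i z).1⟩
  have hg : Feas p (⋃ m, A m) g := by
    refine ⟨fun i => Measurable.limsup fun n => (hf n).1 i, fun i z => ⟨?_, ?_⟩, fun e he => ?_⟩
    · exact le_limsup_of_frequently_le (Eventually.of_forall fun n => ((hf n).2.1 i z).1).frequently
        (hbdd i z)
    · exact limsup_le_of_le (hbdd' i z).isCoboundedUnder_le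
        (Eventually.of_forall fun n => ((hf n).2.1 i z).2)
    · obtain ⟨m, hm⟩ := Set.mem_iUnion.1 he
      refine le_of_forall_pos_le_add fun ε hε => ?_
      have hcard : (0 : ℝ) < Fintype.card ι := by exact_mod_cast Fintype.card_pos
      have hev : ∀ᶠ n in atTop, ∀ i, f n i (p i e) < g i (p i e) + ε / Fintype.card ι := by
        rw [eventually_all]
        intro i
        exact eventually_lt_of_limsup_lt (lt_add_of_pos_right _ (by positivity)) (hbdd i _)
      obtain ⟨n, hn, hmn⟩ := (hev.and (eventually_ge_atTop m)).exists
      have h1 := (hf n).2.2 e (hA (hmn.trans (hφ.id_le n)) hm)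
      refine h1.trans ?_
      calc ∑ i, f n i (p i e) ≤ ∑ i, (g i (p i e) + ε / Fintype.card ι) :=
            Finset.sum_le_sum fun i _ => (hn i).le
        _ = _ := by
          rw [Finset.sum_add_distrib]; simp; field_simp
  have hlimE : Tendsto (fun n => En ρ (f n)) atTop (𝓝 (En ρ g)) := by
    refine tendsto_finset_sum _ fun i _ => ?_
    refine tendsto_integral_of_dominated_convergence (fun _ => 1)
      (fun n => (((hf n).1 i).pow_const 2).aestronglyMeasurable) (integrable_const _) ?_ ?_
    · intro n
      refine Eventually.of_forall fun z => ?_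
      rw [Real.norm_eq_abs, abs_of_nonneg (sq_nonneg _)]
      nlinarith [(hf n).2.1 i z]
    · filter_upwards [hconv i] with z hz
      obtain ⟨l, hl⟩ := hz
      have : g i z = l := hl.limsup_eq
      rw [this]
      exact hl.pow 2
  have hη0 : Tendsto (fun n => L + η n) atTop (𝓝 (L + 0)) := by
    refine tendsto_const_nhds.add ?_
    have := (tendsto_pow_atTop_nhds_zero_of_lt_one (r := (1 / 4 : ℝ)) (by norm_num)
      (by norm_num)).div_const 16
    simpa [η] using this
  have : En ρ g ≤ L + 0 := le_of_tendsto_of_tendsto' hlimE hη0 fun n => (hfE n).le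
  linarith [Cap_le (ρ := ρ) hg]

end Kel

namespace Kel

open MeasureTheory Filter Topology

variable {ι Z : Type*} [Fintype ι] [MeasurableSpace Z]

/-- The truncated sets in Baire space. -/
def Kj (m : ℕ → ℕ) (j : ℕ) : Set (ℕ → ℕ) := {e | ∀ i < j, e i ≤ m i}

/-- The compact set in Baire space. -/
def KK (m : ℕ → ℕ) : Set (ℕ → ℕ) := {e | ∀ i, e i ≤ m i}

lemma KK_compact (m : ℕ → ℕ) : IsCompact (KK m) := by
  have : KK m = Set.pi Set.univ (fun i => Set.Iic (m i)) := by ext e; simp [KK, Pi.le_def]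
  rw [this]
  exact isCompact_univ_pi fun i => (Set.finite_Iic (m i)).isCompact

lemma Kj_subset (m : ℕ → ℕ) (U : Set (ℕ → ℕ)) (hU : IsOpen U) (h : KK m ⊆ U) :
    ∃ j, Kj m j ⊆ U := by
  by_contra! hcon
  choose e he heU using fun j => Set.not_subset.1 (hcon j)
  let t : ℕ → ℕ → ℕ := fun j i => min (e j i) (m i)
  obtain ⟨x, hx, φ, hφ, hlim⟩ := (KK_compact m).tendsto_subseq (x := t)
    (fun j i => min_le_right _ _)
  have h2 : Tendsto (fun n => e (φ n)) atTop (𝓝 x) := by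
    rw [tendsto_pi_nhds] at hlim ⊢
    intro i
    refine (hlim i).congr' ?_
    filter_upwards [eventually_gt_atTop i] with n hn
    have : i < φ n := hn.trans_le (hφ.id_le n)
    exact min_eq_left (he (φ n) i this)
  have := hU.isClosed_compl.mem_of_tendsto h2 (Eventually.of_forall fun n => heU (φ n))
  exact this (h hx)

lemma exists_m [Nonempty ι] (ρ : Measure Z) [IsFiniteMeasure ρ] (p : ι → (ℕ → ℕ) → Z) (δ : ℝ)
    (h : δ < Cap ρ p Set.univ) : ∃ m : ℕ → ℕ, ∀ j, δ < Cap ρ p (Kj m j) := by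
  have step : ∀ (j : ℕ) (s : {s : Set (ℕ → ℕ) // δ < Cap ρ p s}),
      ∃ M : ℕ, δ < Cap ρ p (s.1 ∩ {e | e j ≤ M}) := by
    rintro j ⟨s, hs⟩
    by_contra! hcon
    have := Cap_iUnion ρ p (fun M => s ∩ {e | e j ≤ M})
      (fun M N hMN => Set.inter_subset_inter_right _ fun e (he : e j ≤ M) => le_trans he hMN) δ hcon
    have h2 : (⋃ M, s ∩ {e : ℕ → ℕ | e j ≤ M}) = s := by
      rw [← Set.inter_iUnion]
      refine Set.inter_eq_left.2 fun e _ => Set.mem_iUnion.2 ⟨e j, le_refl (e j)⟩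
    rw [h2] at this
    linarith
  choose M hM using step
  let s : ℕ → {s : Set (ℕ → ℕ) // δ < Cap ρ p s} := fun n =>
    Nat.rec ⟨Set.univ, h⟩ (fun j s => ⟨s.1 ∩ {e | e j ≤ M j s}, hM j s⟩) n
  have hs : ∀ j, (s (j + 1)).1 = (s j).1 ∩ {e | e j ≤ M j (s j)} := fun j => rfl
  refine ⟨fun j => M j (s j), fun j => ?_⟩
  have : Kj (fun j => M j (s j)) j = (s j).1 := by
    induction j with
    | zero => ext e; simp [Kj, s]
    | succ j ih =>
      rw [hs, ← ih]
      ext e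
      simp only [Kj, Set.mem_ofPred_eq, Set.mem_inter_iff]
      constructor
      · exact fun h => ⟨fun i hi => h i (by omega), h j (by omega)⟩
      · rintro ⟨h1, h2⟩ i hi
        rcases Nat.lt_succ_iff_lt_or_eq.1 hi with h | rfl
        · exact h1 i h
        · exact h2
  rw [this]
  exact (s j).2

variable [TopologicalSpace Z] [PolishSpace Z] [BorelSpace Z]

lemma exists_lsc (ρ : Measure Z) [IsFiniteMeasure ρ] (f : Z → ℝ) (hf : Measurable f)
    (h01 : ∀ z, 0 ≤ f z ∧ f z ≤ 1) (ε : ℝ) (hε : 0 < ε) :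
    ∃ g : Z → ENNReal, LowerSemicontinuous g ∧ (∀ z, ENNReal.ofReal (f z) < g z) ∧
      ∫ z, ((min (g z) 1).toReal) ^ 2 ∂ρ ≤ ∫ z, (f z) ^ 2 ∂ρ + ε := by
  let _ := TopologicalSpace.upgradeIsCompletelyMetrizable Z
  obtain ⟨g, hfg, hg, hintg⟩ := exists_lt_lowerSemicontinuous_lintegral_ge ρ
    (fun z => (f z).toNNReal) hf.real_toNNReal (ε := ENNReal.ofReal (ε / 2)) (by simpa using hε)
  refine ⟨g, hg, hfg, ?_⟩
  have hgm := hg.measurable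
  set k : Z → ℝ := fun z => (min (g z) 1).toReal with hk
  have hkm : Measurable k := (hgm.min measurable_const).ennreal_toReal
  have hk1 : ∀ z, k z ≤ 1 := fun z => by
    simp only [hk]
    exact ENNReal.toReal_le_of_le_ofReal (by norm_num) (by simp)
  have hk0 : ∀ z, 0 ≤ k z := fun z => ENNReal.toReal_nonneg
  have hfk : ∀ z, f z ≤ k z := fun z => by
    simp only [hk]
    rw [← ENNReal.ofReal_le_iff_le_toReal (by simp)]
    exact le_min (hfg z).le (by simpa using (h01 z).2)
  have i1 : Integrable f ρ := integrable_bdd hf 1 fun z => by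
    rw [abs_of_nonneg (h01 z).1]; exact (h01 z).2
  have i2 : Integrable k ρ := integrable_bdd hkm 1 fun z => by
    rw [abs_of_nonneg (hk0 z)]; exact hk1 z
  have i3 : Integrable (fun z => f z ^ 2) ρ := integrable_bdd (by fun_prop) 1 fun z => by
    rw [abs_of_nonneg (sq_nonneg _)]; nlinarith [h01 z]
  have i4 : Integrable (fun z => k z ^ 2) ρ := integrable_bdd (by fun_prop) 1 fun z => by
    rw [abs_of_nonneg (sq_nonneg _)]; nlinarith [hk0 z, hk1 z]
  have key : ∫ z, k z ∂ρ ≤ ∫ z, f z ∂ρ + ε / 2 := by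
    have h1 : ENNReal.ofReal (∫ z, k z ∂ρ) ≤ ENNReal.ofReal (∫ z, f z ∂ρ + ε / 2) := by
      rw [ENNReal.ofReal_add (integral_nonneg fun z => (h01 z).1) (by positivity),
        ofReal_integral_eq_lintegral_ofReal i2 (Eventually.of_forall hk0),
        ofReal_integral_eq_lintegral_ofReal i1 (Eventually.of_forall fun z => (h01 z).1)]
      refine le_trans (lintegral_mono fun z => ?_) hintg
      simp only [hk]
      rw [ENNReal.ofReal_toReal (by simp)]
      exact min_le_left _ _
    exact (ENNReal.ofReal_le_ofReal_iff
      (add_nonneg (integral_nonneg fun z => (h01 z).1) (by positivity))).1 h1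
  have h5 : ∫ z, k z ^ 2 ∂ρ ≤ ∫ z, (f z ^ 2 + 2 * (k z - f z)) ∂ρ := by
    refine integral_mono i4 (i3.add ((i2.sub i1).const_mul 2)) fun z => ?_
    nlinarith [hk0 z, hk1 z, hfk z, h01 z]
  have i5 : Integrable (fun z => k z - f z) ρ := i2.sub i1
  rw [integral_add i3 (i5.const_mul 2), integral_const_mul, integral_sub i2 i1] at h5
  linarith

lemma Cap_KK [Nonempty ι] (ρ : Measure Z) [IsFiniteMeasure ρ] (p : ι → (ℕ → ℕ) → Z)
    (hp : ∀ i, Continuous (p i)) (δ : ℝ)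
    (m : ℕ → ℕ) (hm : ∀ j, δ < Cap ρ p (Kj m j)) : δ ≤ Cap ρ p (KK m) := by
  by_contra! hcon
  obtain ⟨f, hf, hE⟩ := exists_near ρ p _ hcon
  have hcard : (0 : ℝ) < Fintype.card ι := by exact_mod_cast Fintype.card_pos
  choose g hg hfg hintg using fun i => exists_lsc ρ (f i) (hf.1 i) (hf.2.1 i)
    ((δ - En ρ f) / Fintype.card ι) (by have := sub_pos.2 hE; positivity)
  have hlsc : LowerSemicontinuous (fun e => ∑ i, g i (p i e)) :=
    lowerSemicontinuous_sum fun i _ => LowerSemicontinuous.comp (hg i) (hp i)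
  obtain ⟨j, hj⟩ := Kj_subset m {e | 1 < ∑ i, g i (p i e)} (hlsc.isOpen_preimage 1) (by
    intro e he
    have h1 := hf.2.2 e he
    have h2 : (1 : ENNReal) ≤ ∑ i, ENNReal.ofReal (f i (p i e)) := by
      rw [← ENNReal.ofReal_sum_of_nonneg fun i _ => (hf.2.1 i _).1]
      simpa using h1
    refine h2.trans_lt ?_
    refine ENNReal.sum_lt_sum_of_nonempty Finset.univ_nonempty fun i _ => hfg i _)
  let k : ι → Z → ℝ := fun i z => (min (g i z) 1).toReal
  have hk1 : ∀ i z, k i z ≤ 1 := fun i z =>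
    ENNReal.toReal_le_of_le_ofReal (by norm_num) (by simp)
  have hkF : Feas p (Kj m j) k := by
    refine ⟨fun i => ((hg i).measurable.min measurable_const).ennreal_toReal,
      fun i z => ⟨ENNReal.toReal_nonneg, hk1 i z⟩, fun e he => ?_⟩
    have h1 : 1 < ∑ i, g i (p i e) := hj he
    by_cases hbig : ∃ i, 1 ≤ g i (p i e)
    · obtain ⟨i, hi⟩ := hbig
      have : k i (p i e) = 1 := by simp only [k]; rw [min_eq_right hi]; simp
      rw [← this]
      exact Finset.single_le_sum (f := fun i => k i (p i e))
        (fun i _ => ENNReal.toReal_nonneg) (Finset.mem_univ i)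
    · push Not at hbig
      have h2 : ∑ i, k i (p i e) = (∑ i, g i (p i e)).toReal := by
        rw [ENNReal.toReal_sum fun i _ => (hbig i).ne_top]
        refine Finset.sum_congr rfl fun i _ => ?_
        simp only [k]; rw [min_eq_left (hbig i).le]
      rw [h2]
      have h3 : ∑ i, g i (p i e) ≠ ⊤ := ENNReal.sum_ne_top.2 fun i _ => (hbig i).ne_top
      rw [← ENNReal.ofReal_le_iff_le_toReal h3]
      simpa using h1.le
  have h1 := Cap_le (ρ := ρ) hkF
  have h2 : En ρ k ≤ En ρ f + (δ - En ρ f) := by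
    calc En ρ k ≤ ∑ i, (∫ z, (f i z) ^ 2 ∂ρ + (δ - En ρ f) / Fintype.card ι) :=
          Finset.sum_le_sum fun i _ => hintg i
      _ = _ := by
        rw [Finset.sum_add_distrib]
        simp only [Finset.sum_const, Finset.card_univ, nsmul_eq_mul]
        rw [mul_div_cancel₀ _ hcard.ne']
        rfl
  linarith [hm j]

/-- Comparison of finite measures by bounded continuous functions. -/
lemma le_of_bcf (κ ρ : Measure Z) [IsFiniteMeasure κ] [IsFiniteMeasure ρ]
    (h : ∀ g : Z → ℝ, Continuous g → (∀ z, 0 ≤ g z) → (∃ C, ∀ z, g z ≤ C) →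
      ∫ z, g z ∂κ ≤ ∫ z, g z ∂ρ) : κ ≤ ρ := by
  let _ := TopologicalSpace.upgradeIsCompletelyMetrizable Z
  have hcl : ∀ F : Set Z, IsClosed F → κ F ≤ ρ F := by
    intro F hF
    refine ge_of_tendsto' (HasOuterApproxClosed.tendsto_lintegral_apprSeq hF ρ) fun n => ?_
    refine (HasOuterApproxClosed.measure_le_lintegral hF κ n).trans ?_
    have hb : ∀ (τ : Measure Z) [IsFiniteMeasure τ],
        ∫⁻ z, (hF.apprSeq n z : ENNReal) ∂τ = ENNReal.ofReal (∫ z, (hF.apprSeq n z : ℝ) ∂τ) := by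
      intro τ _
      rw [ofReal_integral_eq_lintegral_ofReal]
      · simp
      · exact (hF.apprSeq n).integrable_of_nnreal τ
      · exact Eventually.of_forall fun z => NNReal.coe_nonneg _
    rw [hb κ, hb ρ]
    refine ENNReal.ofReal_le_ofReal (h _ ?_ (fun z => NNReal.coe_nonneg _) ?_)
    · exact NNReal.continuous_coe.comp (hF.apprSeq n).continuous
    · exact ⟨1, fun z => by exact_mod_cast HasOuterApproxClosed.apprSeq_apply_le_one hF n z⟩
  rw [Measure.le_iff]
  intro s hs
  refine ENNReal.le_of_forall_pos_le_add fun ε hε _ => ?_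
  obtain ⟨K, hKs, hK, hlt⟩ := hs.exists_isClosed_lt_add (measure_ne_top κ s) (ε := (ε : ENNReal))
    (by simpa using hε.ne')
  refine hlt.le.trans ?_
  exact add_le_add_left ((hcl K hK).trans (measure_mono hKs)) _

end Kel

namespace Kel

open MeasureTheory Filter Topology

open CompactlySupported

variable {ι X Z : Type*} [Fintype ι] [MeasurableSpace Z]

/-- Values of dominating families. -/
def DS [TopologicalSpace X] (ρ : Measure Z) (q : ι → X → Z) (φ : C_c(X, ℝ)) : Set ℝ :=
  {r | ∃ f : ι → Z → ℝ, (∀ i, Measurable (f i)) ∧ (∀ i z, 0 ≤ f i z) ∧ (∃ C, ∀ i z, f i z ≤ C) ∧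
    (∀ x, φ x ≤ ∑ i, f i (q i x)) ∧ r = ∑ i, ∫ z, f i z ∂ρ}

lemma DS_nonneg [TopologicalSpace X] (ρ : Measure Z) (q : ι → X → Z) (φ : C_c(X, ℝ)) :
    ∀ r ∈ DS ρ q φ, 0 ≤ r := by
  rintro r ⟨f, _, h0, _, _, rfl⟩
  exact Finset.sum_nonneg fun i _ => integral_nonneg (h0 i)

lemma DS_bdd [TopologicalSpace X] (ρ : Measure Z) (q : ι → X → Z) (φ : C_c(X, ℝ)) :
    BddBelow (DS ρ q φ) := ⟨0, DS_nonneg ρ q φ⟩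

lemma DS_nonempty [Nonempty ι] [TopologicalSpace X] [CompactSpace X]
    (ρ : Measure Z) (q : ι → X → Z) (φ : C_c(X, ℝ)) :
    (DS ρ q φ).Nonempty := by
  obtain ⟨C, hC⟩ := isCompact_univ.exists_bound_of_continuousOn (f := φ) φ.continuous.continuousOn
  refine ⟨_, fun _ _ => |C|, fun i => measurable_const, fun i z => abs_nonneg _, ⟨|C|, by simp⟩,
    fun x => ?_, rfl⟩
  have h1 := hC x trivial
  have h2 : φ x ≤ |C| := (le_abs_self _).trans (h1.trans (le_abs_self _))
  have hcard : (1 : ℝ) ≤ Fintype.card ι := by exact_mod_cast Fintype.card_pos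
  simp only [Finset.sum_const, Finset.card_univ, nsmul_eq_mul]
  nlinarith [abs_nonneg C]

lemma DS_smul [TopologicalSpace X] (ρ : Measure Z) (q : ι → X → Z) (φ : C_c(X, ℝ)) (c : ℝ)
    (hc : 0 < c) (r : ℝ) (hr : r ∈ DS ρ q φ) : c * r ∈ DS ρ q (c • φ) := by
  obtain ⟨f, hf, h0, ⟨C, hC⟩, hφ, rfl⟩ := hr
  refine ⟨fun i z => c * f i z, fun i => (hf i).const_mul c, fun i z => mul_nonneg hc.le (h0 i z),
    ⟨c * C, fun i z => mul_le_mul_of_nonneg_left (hC i z) hc.le⟩, fun x => ?_, ?_⟩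
  · rw [← Finset.mul_sum]
    simpa using mul_le_mul_of_nonneg_left (hφ x) hc.le
  · rw [Finset.mul_sum]
    exact Finset.sum_congr rfl fun i _ => (integral_const_mul c _).symm

lemma sInf_DS_smul_le [Nonempty ι] [TopologicalSpace X] [CompactSpace X]
    (ρ : Measure Z) (q : ι → X → Z) (φ : C_c(X, ℝ)) (c : ℝ)
    (hc : 0 < c) : sInf (DS ρ q (c • φ)) ≤ c * sInf (DS ρ q φ) := by
  rw [← div_le_iff₀' hc]
  refine le_csInf (DS_nonempty ρ q φ) fun r hr => ?_
  rw [div_le_iff₀' hc]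
  exact csInf_le (DS_bdd _ _ _) (DS_smul ρ q φ c hc r hr)

variable [TopologicalSpace Z] [PolishSpace Z] [BorelSpace Z]

lemma duality [Nonempty ι] [TopologicalSpace X] [CompactSpace X] [T2Space X] [Nonempty X]
    [MeasurableSpace X] [BorelSpace X]
    (ρ : Measure Z) [IsFiniteMeasure ρ] (q : ι → X → Z) (hq : ∀ i, Continuous (q i))
    (δ : ℝ) (hδ : 0 < δ)
    (H : ∀ f : ι → Z → ℝ, (∀ i, Measurable (f i)) → (∀ i z, 0 ≤ f i z) → (∃ C, ∀ i z, f i z ≤ C) →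
      (∀ x, 1 ≤ ∑ i, f i (q i x)) → δ ≤ ∑ i, ∫ z, f i z ∂ρ) :
    ∃ κ : Measure X, IsFiniteMeasure κ ∧ κ ≠ 0 ∧ ∀ i, κ.map (q i) ≤ ρ := by
  let N : C_c(X, ℝ) → ℝ := fun φ => sInf (DS ρ q φ)
  have N0 : ∀ φ, 0 ≤ N φ := fun φ => Real.sInf_nonneg (DS_nonneg ρ q φ)
  have Nhom : ∀ c : ℝ, 0 < c → ∀ φ, N (c • φ) = c * N φ := by
    intro c hc φ
    refine le_antisymm (sInf_DS_smul_le ρ q φ c hc) ?_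
    have := sInf_DS_smul_le ρ q (c • φ) c⁻¹ (inv_pos.2 hc)
    rw [smul_smul, inv_mul_cancel₀ hc.ne', one_smul] at this
    rwa [le_inv_mul_iff₀ hc] at this
  have Nadd : ∀ φ ψ, N (φ + ψ) ≤ N φ + N ψ := by
    intro φ ψ
    refine le_of_forall_pos_le_add fun ε hε => ?_
    obtain ⟨r, ⟨f, hf, f0, ⟨C, hC⟩, hfφ, rfl⟩, hr⟩ :=
      exists_lt_of_csInf_lt (DS_nonempty ρ q φ) (show N φ < N φ + ε / 2 by linarith)
    obtain ⟨s, ⟨g, hg, g0, ⟨D, hD⟩, hgφ, rfl⟩, hs⟩ :=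
      exists_lt_of_csInf_lt (DS_nonempty ρ q ψ) (show N ψ < N ψ + ε / 2 by linarith)
    have : N (φ + ψ) ≤ ∑ i, ∫ z, (f i z + g i z) ∂ρ := by
      refine csInf_le (DS_bdd _ _ _) ⟨fun i z => f i z + g i z, fun i => (hf i).add (hg i),
        fun i z => add_nonneg (f0 i z) (g0 i z), ⟨C + D, fun i z => add_le_add (hC i z) (hD i z)⟩,
        fun x => ?_, rfl⟩
      rw [Finset.sum_add_distrib]
      exact add_le_add (hfφ x) (hgφ x)
    have e : ∑ i, ∫ z, (f i z + g i z) ∂ρ = ∑ i, ∫ z, f i z ∂ρ + ∑ i, ∫ z, g i z ∂ρ := by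
      rw [← Finset.sum_add_distrib]
      refine Finset.sum_congr rfl fun i _ => integral_add ?_ ?_
      · exact integrable_bdd (hf i) C fun z => by rw [abs_of_nonneg (f0 i z)]; exact hC i z
      · exact integrable_bdd (hg i) D fun z => by rw [abs_of_nonneg (g0 i z)]; exact hD i z
    linarith
  let toC : C(X, ℝ) → C_c(X, ℝ) := CompactlySupportedContinuousMap.continuousMapEquiv
  have toC_apply : ∀ (φ : C(X, ℝ)) x, toC φ x = φ x := fun φ x => rfl
  let one : C_c(X, ℝ) := toC 1
  have one_apply : ∀ x, one x = 1 := fun x => rfl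
  have hone : one ≠ 0 := by
    intro h
    obtain ⟨x⟩ := ‹Nonempty X›
    have := one_apply x
    rw [h] at this
    simp at this
  have N1 : δ ≤ N one := by
    refine le_csInf (DS_nonempty ρ q one) ?_
    rintro r ⟨f, hf, f0, hC, hφ, rfl⟩
    exact H f hf f0 hC hφ
  obtain ⟨Λ, hΛ1, hΛ2⟩ := exists_extension_of_le_sublinear
    (LinearPMap.mkSpanSingleton (σ := RingHom.id ℝ) one (N one) hone) N Nhom Nadd (by
      rintro ⟨x, hx⟩
      obtain ⟨t, rfl⟩ := Submodule.mem_span_singleton.1 hx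
      have : (LinearPMap.mkSpanSingleton (σ := RingHom.id ℝ) one (N one) hone) ⟨t • one, hx⟩
          = t • N one := LinearPMap.mkSpanSingleton'_apply _ _ _ _ _
      rw [this]
      simp only [smul_eq_mul]
      rcases lt_or_ge 0 t with ht | ht
      · rw [Nhom t ht]
      · exact (mul_nonpos_of_nonpos_of_nonneg ht (N0 _)).trans (N0 _))
  have hΛone : Λ one = N one := by
    have h1 := hΛ1 ⟨one, Submodule.mem_span_singleton_self one⟩
    rw [h1]
    have : (⟨one, Submodule.mem_span_singleton_self one⟩ : Submodule.span ℝ {one})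
      = ⟨(1 : ℝ) • one, by simpa using Submodule.mem_span_singleton_self one⟩ := by simp
    have h2 : (LinearPMap.mkSpanSingleton (σ := RingHom.id ℝ) one (N one) hone)
        ⟨(1 : ℝ) • one, by simpa using Submodule.mem_span_singleton_self one⟩
          = (1 : ℝ) • N one := LinearPMap.mkSpanSingleton'_apply _ _ _ _ _
    simp only [one_smul] at h2
    exact h2
  have hpos : ∀ φ : C_c(X, ℝ), 0 ≤ φ → 0 ≤ Λ φ := by
    intro φ hφ
    have h1 := hΛ2 (-φ)
    have h2 : N (-φ) ≤ 0 := by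
      refine csInf_le (DS_bdd _ _ _) ⟨fun _ _ => 0, fun i => measurable_const, by simp, ⟨0, by simp⟩,
        fun x => ?_, by simp⟩
      have : 0 ≤ φ x := hφ x
      simpa using this
    rw [map_neg] at h1
    linarith
  let Λp : C_c(X, ℝ) →ₚ[ℝ] ℝ := PositiveLinearMap.mk₀ Λ hpos
  let κ := RealRMK.rieszMeasure Λp
  have hκ : ∀ φ : C_c(X, ℝ), ∫ x, φ x ∂κ = Λ φ := fun φ => RealRMK.integral_rieszMeasure Λp φ
  have hκ1 : ∫ _, (1 : ℝ) ∂κ = N one := by rw [← hΛone, ← hκ one]; rfl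
  have hfinκ : IsFiniteMeasure κ := by
    by_contra hcon
    rw [not_isFiniteMeasure_iff] at hcon
    simp [Measure.real, hcon] at hκ1
    linarith
  refine ⟨κ, hfinκ, ?_, fun i => ?_⟩
  · intro h
    rw [h] at hκ1
    simp at hκ1
    linarith
  · have : IsFiniteMeasure (κ.map (q i)) := inferInstance
    refine le_of_bcf _ _ fun g hg g0 hC => ?_
    rw [integral_map (hq i).measurable.aemeasurable hg.measurable.aestronglyMeasurable]
    have h1 := hκ (toC ⟨fun x => g (q i x), hg.comp (hq i)⟩)
    have h2 : ∫ x, g (q i x) ∂κ = Λ (toC ⟨fun x => g (q i x), hg.comp (hq i)⟩) := h1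
    rw [h2]
    refine (hΛ2 _).trans ?_
    classical
    obtain ⟨C, hC⟩ := hC
    refine csInf_le (DS_bdd _ _ _) ⟨fun j => if j = i then g else 0, fun j => ?_, fun j z => ?_,
      ⟨|C|, fun j z => ?_⟩, fun x => ?_, ?_⟩
    · by_cases hji : j = i <;> simp only [hji, if_true, if_false]
      · exact hg.measurable
      · exact measurable_const
    · by_cases hji : j = i <;> simp only [hji, if_true, if_false]
      · exact g0 z
      · simp
    · by_cases hji : j = i <;> simp only [hji, if_true, if_false]
      · exact (hC z).trans (le_abs_self _)
      · simp
    · rw [Finset.sum_eq_single i]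
      · simp [toC_apply]
      · intro j _ hj; simp [hj]
      · simp
    · rw [Finset.sum_eq_single i]
      · simp
      · intro j _ hj; simp [hj]
      · simp

lemma kellerer_baire [Nonempty ι] (ρ : Measure Z) [IsFiniteMeasure ρ] (p : ι → (ℕ → ℕ) → Z)
    (hp : ∀ i, Continuous (p i)) :
    (∃ Γ : Set Z, MeasurableSet Γ ∧ ρ Γᶜ = 0 ∧ ∀ e, ∃ i, p i e ∉ Γ) ∨
    ∃ κ : Measure (ℕ → ℕ), IsFiniteMeasure κ ∧ κ ≠ 0 ∧ ∀ i, κ.map (p i) ≤ ρ := by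
  rcases lt_or_ge 0 (Cap ρ p Set.univ) with hpos | hzero
  · right
    set δ := Cap ρ p Set.univ / 2 with hδ
    have hδ0 : 0 < δ := by positivity
    obtain ⟨m, hm⟩ := exists_m ρ p δ (by linarith)
    have hK := Cap_KK ρ p hp δ m hm
    have : CompactSpace (KK m) := isCompact_iff_compactSpace.1 (KK_compact m)
    have : Nonempty (KK m) := ⟨⟨0, fun i => Nat.zero_le _⟩⟩
    obtain ⟨κ, h1, h2, h3⟩ := duality (X := KK m) ρ (fun i x => p i x.1)
      (fun i => (hp i).comp continuous_subtype_val) δ hδ0 (by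
        intro f hf f0 ⟨C, hC⟩ hfx
        let k : ι → Z → ℝ := fun i z => min (f i z) 1
        have hkF : Feas p (KK m) k := by
          refine ⟨fun i => (hf i).min measurable_const,
            fun i z => ⟨le_min (f0 i z) zero_le_one, min_le_right _ _⟩, fun e he => ?_⟩
          have h1 := hfx ⟨e, he⟩
          by_cases hbig : ∃ i, 1 ≤ f i (p i e)
          · obtain ⟨i, hi⟩ := hbig
            have : k i (p i e) = 1 := min_eq_right hi
            rw [← this]
            exact Finset.single_le_sum (f := fun i => k i (p i e))
              (fun i _ => le_min (f0 i _) zero_le_one) (Finset.mem_univ i)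
          · push Not at hbig
            refine h1.trans (le_of_eq (Finset.sum_congr rfl fun i _ => ?_))
            exact (min_eq_left (hbig i).le).symm
        refine hK.trans ((Cap_le hkF).trans (Finset.sum_le_sum fun i _ => ?_))
        have i1 : Integrable (f i) ρ := integrable_bdd (hf i) C fun z => by
          rw [abs_of_nonneg (f0 i z)]; exact hC i z
        refine integral_mono_of_nonneg (Eventually.of_forall fun z => sq_nonneg _) i1
          (Eventually.of_forall fun z => ?_)
        have a1 : k i z ≤ f i z := min_le_left _ _
        have a2 : k i z ≤ 1 := min_le_right _ _
        have a3 : 0 ≤ k i z := le_min (f0 i z) zero_le_one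
        show k i z ^ 2 ≤ f i z
        nlinarith)
    refine ⟨κ.map Subtype.val, inferInstance, ?_, fun i => ?_⟩
    · rwa [Ne, Measure.map_eq_zero_iff measurable_subtype_coe.aemeasurable]
    · rw [Measure.map_map (hp i).measurable measurable_subtype_coe]
      exact h3 i
  · left
    have hcard : (0 : ℝ) < Fintype.card ι := by exact_mod_cast Fintype.card_pos
    choose f hf hE using fun k : ℕ => exists_near ρ p Set.univ (r := (1 / 2 : ℝ) ^ k)
      (lt_of_le_of_lt hzero (by positivity))
    let n : ℝ := Fintype.card ι
    let S : ι → ℕ → Set Z := fun i k => {z | 1 / n ≤ f k i z}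
    have hS : ∀ i k, MeasurableSet (S i k) := fun i k =>
      measurableSet_le measurable_const ((hf k).1 i)
    have hSm : ∀ i k, ρ (S i k) ≤ ENNReal.ofReal (n ^ 2) * (1 / 2 : ENNReal) ^ k := by
      intro i k
      have e1 : ENNReal.ofReal (n ^ 2) * (1 / 2 : ENNReal) ^ k
          = ENNReal.ofReal (n ^ 2 * (1 / 2) ^ k) := by
        rw [ENNReal.ofReal_mul (by positivity), ENNReal.ofReal_pow (by norm_num : (0:ℝ) ≤ 1 / 2)]
        congr 2
        rw [ENNReal.ofReal_div_of_pos (by norm_num)]; simp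
      rw [e1, ← ofReal_measureReal]
      refine ENNReal.ofReal_le_ofReal ?_
      have i1 : Integrable (fun z => f k i z ^ 2) ρ :=
        integrable_bdd (((hf k).1 i).pow_const 2) 1 fun z => by
          rw [abs_of_nonneg (sq_nonneg _)]; nlinarith [(hf k).2.1 i z]
      have h1 := mul_meas_ge_le_integral_of_nonneg (Eventually.of_forall fun z => sq_nonneg _) i1
        ((1 / n) ^ 2)
      have h2 : S i k ⊆ {z | (1 / n) ^ 2 ≤ f k i z ^ 2} := fun z (hz : 1 / n ≤ f k i z) =>
        pow_le_pow_left₀ (by positivity) hz 2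
      have h3 : ρ.real (S i k) ≤ ρ.real {z | (1 / n) ^ 2 ≤ f k i z ^ 2} := measureReal_mono h2
      have h4 : ∫ z, f k i z ^ 2 ∂ρ ≤ (1 / 2 : ℝ) ^ k := by
        refine le_trans ?_ (hE k).le
        exact Finset.single_le_sum (f := fun i => ∫ z, (f k i z) ^ 2 ∂ρ)
          (fun i _ => integral_nonneg fun z => sq_nonneg _) (Finset.mem_univ i)
      have h5 : (1 / n) ^ 2 * ρ.real (S i k) ≤ (1 / 2 : ℝ) ^ k := by
        refine le_trans (mul_le_mul_of_nonneg_left h3 (by positivity)) (h1.trans h4)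
      have hn : 0 < n ^ 2 := by positivity
      calc ρ.real (S i k) = n ^ 2 * ((1 / n) ^ 2 * ρ.real (S i k)) := by
            rw [← mul_assoc, ← mul_pow, mul_one_div_cancel hcard.ne', one_pow, one_mul]
        _ ≤ _ := mul_le_mul_of_nonneg_left h5 hn.le
    let G : ι → Set Z := fun i => limsup (S i) atTop
    have hG : ∀ i, ρ (G i) = 0 := by
      intro i
      refine measure_limsup_atTop_eq_zero ?_
      refine ne_top_of_le_ne_top ?_ (ENNReal.tsum_le_tsum (hSm i))
      rw [ENNReal.tsum_mul_left, ENNReal.tsum_geometric]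
      exact ENNReal.mul_ne_top (by simp) (by simp)
    refine ⟨(⋃ i, G i)ᶜ, ?_, ?_, fun e => ?_⟩
    · exact (MeasurableSet.iUnion fun i => MeasurableSet.measurableSet_limsup (hS i)).compl
    · rw [compl_compl]
      exact measure_iUnion_null hG
    · by_contra! hcon
      have hev : ∀ᶠ k in atTop, ∀ i, p i e ∉ S i k := by
        rw [eventually_all]
        intro i
        have h1 : p i e ∉ G i := fun h => hcon i (Set.mem_iUnion.2 ⟨i, h⟩)
        simp only [G, mem_limsup_iff_frequently_mem, not_frequently] at h1
        exact h1
      obtain ⟨k, hk⟩ := hev.exists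
      have h1 := (hf k).2.2 e trivial
      have h2 : ∑ i, f k i (p i e) < ∑ _i : ι, 1 / n :=
        Finset.sum_lt_sum_of_nonempty Finset.univ_nonempty fun i _ => not_le.1 (hk i)
      simp only [Finset.sum_const, Finset.card_univ, nsmul_eq_mul] at h2
      rw [mul_one_div_cancel hcard.ne'] at h2
      linarith

/-- Kellerer type alternative. -/
lemma kellerer {E : Type*} [TopologicalSpace E] [PolishSpace E] [MeasurableSpace E] [BorelSpace E]
    (ρ : Measure Z) [IsFiniteMeasure ρ] (p : ι → E → Z)
    (hp : ∀ i, Continuous (p i)) (B : Set E) (hB : MeasurableSet B) :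
    (∃ Γ : Set Z, MeasurableSet Γ ∧ ρ Γᶜ = 0 ∧ ∀ e ∈ B, ∃ i, p i e ∉ Γ) ∨
    ∃ κ : Measure E, IsFiniteMeasure κ ∧ κ ≠ 0 ∧ κ Bᶜ = 0 ∧ ∀ i, κ.map (p i) ≤ ρ := by
  rcases B.eq_empty_or_nonempty with rfl | ⟨b, hb⟩
  · left; exact ⟨Set.univ, MeasurableSet.univ, by simp, by simp⟩
  rcases isEmpty_or_nonempty ι with hι | hι
  · right
    refine ⟨Measure.dirac b, inferInstance, ?_, ?_, fun i => hι.elim i⟩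
    · exact IsProbabilityMeasure.ne_zero _
    · rw [Measure.dirac_apply' _ hB.compl]; simp [hb]
  have hA := hB.analyticSet
  rw [AnalyticSet] at hA
  rcases hA with rfl | ⟨F, hF, hFB⟩
  · exact absurd hb (Set.notMem_empty b)
  rcases kellerer_baire ρ (fun i x => p i (F x)) (fun i => (hp i).comp hF) with
    ⟨Γ, h1, h2, h3⟩ | ⟨κ, h1, h2, h3⟩
  · left
    refine ⟨Γ, h1, h2, fun e he => ?_⟩
    rw [← hFB] at he
    obtain ⟨x, rfl⟩ := he
    exact h3 x
  · right
    refine ⟨κ.map F, inferInstance, ?_, ?_, fun i => ?_⟩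
    · rwa [Ne, Measure.map_eq_zero_iff hF.measurable.aemeasurable]
    · rw [Measure.map_apply hF.measurable hB.compl]
      have : F ⁻¹' Bᶜ = ∅ := by
        ext x; simp [← hFB]
      rw [this]; simp
    · rw [Measure.map_map (hp i).measurable hF.measurable]
      exact h3 i

end Kel

namespace Kel

open MeasureTheory Filter Topology

variable {I J : Type} [Fintype I] [Fintype J]

/-- The configuration space: points `x`, points `y`, signed weights `u`. -/
abbrev Cfg (I J : Type) : Type := (I → ℝ) × (J → ℝ) × (I → J → ℝ)

/-- The grid point with given indices. -/
def pt (t : I × J) (e : Cfg I J) : ℝ × ℝ := (e.1 t.1, e.2.1 t.2)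

/-- The signed perturbation integrated against `φ`. -/
def UU (φ : ℝ × ℝ → ℝ) (e : Cfg I J) : ℝ := ∑ i, ∑ j, e.2.2 i j * φ (e.1 i, e.2.1 j)

/-- Configurations describing an improving competitor. -/
def Bad (c c' : ℝ × ℝ → ℝ) (T : Finset (I × J)) (M : ℝ) : Set (Cfg I J) :=
  {e | (∀ i j, |e.2.2 i j| ≤ 1) ∧ (∀ i j, (i, j) ∉ T → 0 ≤ e.2.2 i j) ∧
    (∀ i, ∑ j, e.2.2 i j = 0) ∧ (∀ j, ∑ i, e.2.2 i j = 0) ∧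
    (∀ i, ∑ j, e.2.2 i j * e.2.1 j = 0) ∧
    (∀ i j, |e.1 i| ≤ M ∧ |e.2.1 j| ≤ M ∧ |c (e.1 i, e.2.1 j)| ≤ M ∧ |c' (e.1 i, e.2.1 j)| ≤ M) ∧
    (UU c e < 0 ∨ (UU c e = 0 ∧ 0 < UU c' e))}

lemma pt_cont (t : I × J) : Continuous (pt t) := by unfold pt; fun_prop

lemma UU_meas {φ : ℝ × ℝ → ℝ} (hφ : Measurable φ) : Measurable (UU (I := I) (J := J) φ) := by
  unfold UU; fun_prop

lemma Bad_meas {c c' : ℝ × ℝ → ℝ} (hc : Measurable c) (hc' : Measurable c') (T : Finset (I × J))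
    (M : ℝ) : MeasurableSet (Bad c c' T M) := by
  have h1 := UU_meas (I := I) (J := J) hc
  have h2 := UU_meas (I := I) (J := J) hc'
  unfold Bad
  simp only [Set.ofPred_and, Set.ofPred_or, Set.ofPred_forall]
  refine MeasurableSet.inter ?_ <| MeasurableSet.inter ?_ <| MeasurableSet.inter ?_ <|
    MeasurableSet.inter ?_ <| MeasurableSet.inter ?_ <| MeasurableSet.inter ?_ <|
    MeasurableSet.union ?_ <| MeasurableSet.inter ?_ ?_
  · exact MeasurableSet.iInter fun i => MeasurableSet.iInter fun j =>
      measurableSet_le (by fun_prop) (by fun_prop)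
  · exact MeasurableSet.iInter fun i => MeasurableSet.iInter fun j => MeasurableSet.iInter fun _ =>
      measurableSet_le (by fun_prop) (by fun_prop)
  · exact MeasurableSet.iInter fun i => measurableSet_eq_fun (by fun_prop) (by fun_prop)
  · exact MeasurableSet.iInter fun i => measurableSet_eq_fun (by fun_prop) (by fun_prop)
  · exact MeasurableSet.iInter fun i => measurableSet_eq_fun (by fun_prop) (by fun_prop)
  · refine MeasurableSet.iInter fun i => MeasurableSet.iInter fun j => ?_
    refine MeasurableSet.inter ?_ <| MeasurableSet.inter ?_ <| MeasurableSet.inter ?_ ?_ <;>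
    exact measurableSet_le (by fun_prop) (by fun_prop)
  · exact measurableSet_lt h1 measurable_const
  · exact measurableSet_eq_fun h1 measurable_const
  · exact measurableSet_lt measurable_const h2

/-- Part of the perturbation, `s = 1` the positive part and `s = -1` the negative part. -/
def bpart (κ : Measure (Cfg I J)) (s : ℝ) (t : I × J) : Measure (ℝ × ℝ) :=
  (κ.withDensity (fun e => ENNReal.ofReal (s * e.2.2 t.1 t.2))).map (pt t)

/-- The positive or negative part of the perturbation. -/
def bet (κ : Measure (Cfg I J)) (s : ℝ) : Measure (ℝ × ℝ) := ∑ t, bpart κ s t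

lemma dens_le (κ : Measure (Cfg I J)) (s : ℝ) (hs : |s| = 1) (t : I × J)
    (hu : ∀ᵐ e ∂κ, ∀ i j, |e.2.2 i j| ≤ 1) :
    κ.withDensity (fun e => ENNReal.ofReal (s * e.2.2 t.1 t.2)) ≤ κ := by
  calc _ ≤ κ.withDensity 1 := withDensity_mono (by
        filter_upwards [hu] with e he
        have h1 : s * e.2.2 t.1 t.2 ≤ 1 := by
          refine (le_abs_self _).trans ?_
          rw [abs_mul, hs, one_mul]; exact he _ _
        simpa using h1)
    _ = κ := withDensity_one

lemma bpart_le (κ : Measure (Cfg I J)) (s : ℝ) (hs : |s| = 1) (t : I × J)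
    (hu : ∀ᵐ e ∂κ, ∀ i j, |e.2.2 i j| ≤ 1) : bpart κ s t ≤ κ.map (pt t) :=
  Measure.map_mono (dens_le κ s hs t hu) (pt_cont t).measurable

lemma bpart_int (κ : Measure (Cfg I J)) [IsFiniteMeasure κ] (s : ℝ) (hs : |s| = 1) (t : I × J)
    (hu : ∀ᵐ e ∂κ, ∀ i j, |e.2.2 i j| ≤ 1) (φ : ℝ × ℝ → ℝ) (hφ : Measurable φ) (C : ℝ)
    (hC : ∀ᵐ e ∂κ, ∀ t, |φ (pt t e)| ≤ C) :
    Integrable φ (bpart κ s t) ∧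
    ∫ z, φ z ∂(bpart κ s t) = ∫ e, max (s * e.2.2 t.1 t.2) 0 * φ (pt t e) ∂κ ∧
    Integrable (fun e => max (s * e.2.2 t.1 t.2) 0 * φ (pt t e)) κ := by
  have hm := (pt_cont t).measurable
  have i1 : Integrable (fun e => φ (pt t e)) κ :=
    Integrable.of_bound (hφ.comp hm).aestronglyMeasurable C (by
      filter_upwards [hC] with e he using he t)
  refine ⟨?_, ?_, ?_⟩
  · rw [bpart, integrable_map_measure hφ.aestronglyMeasurable hm.aemeasurable]
    exact i1.mono_measure (dens_le κ s hs t hu)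
  · rw [bpart, integral_map hm.aemeasurable hφ.aestronglyMeasurable,
      integral_withDensity_eq_integral_toReal_smul (by fun_prop) (by simp)]
    simp only [smul_eq_mul, ENNReal.toReal_ofReal']
  · refine i1.bdd_mul (c := 1) (by fun_prop) ?_
    filter_upwards [hu] with e he
    rw [Real.norm_eq_abs, abs_of_nonneg (le_max_right _ _)]
    refine max_le ?_ zero_le_one
    refine (le_abs_self _).trans ?_
    rw [abs_mul, hs, one_mul]; exact he _ _

lemma bet_int (κ : Measure (Cfg I J)) [IsFiniteMeasure κ]
    (hu : ∀ᵐ e ∂κ, ∀ i j, |e.2.2 i j| ≤ 1) (φ : ℝ × ℝ → ℝ) (hφ : Measurable φ) (C : ℝ)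
    (hC : ∀ᵐ e ∂κ, ∀ t, |φ (pt t e)| ≤ C) :
    Integrable φ (bet κ 1) ∧ Integrable φ (bet κ (-1)) ∧
    ∫ z, φ z ∂(bet κ 1) = ∫ z, φ z ∂(bet κ (-1)) + ∫ e, UU φ e ∂κ := by
  have h1 := fun t => bpart_int κ 1 (by simp) t hu φ hφ C hC
  have h2 := fun t => bpart_int κ (-1) (by simp) t hu φ hφ C hC
  refine ⟨?_, ?_, ?_⟩
  · exact integrable_finsetSum_measure.2 fun t _ => (h1 t).1
  · exact integrable_finsetSum_measure.2 fun t _ => (h2 t).1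
  · unfold bet
    rw [integral_finsetSum_measure fun t _ => (h1 t).1,
      integral_finsetSum_measure fun t _ => (h2 t).1]
    simp only [(h1 _).2.1, (h2 _).2.1]
    rw [← integral_finsetSum _ fun t _ => (h1 t).2.2, ← integral_finsetSum _ fun t _ => (h2 t).2.2,
      ← integral_add (integrable_finsetSum _ fun t _ => (h2 t).2.2)]
    · congr 1
      ext e
      unfold UU
      rw [← Fintype.sum_prod_type' (f := fun i j => e.2.2 i j * φ (e.1 i, e.2.1 j)),
        ← Finset.sum_add_distrib]
      refine Finset.sum_congr rfl fun t _ => ?_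
      have : max (1 * e.2.2 t.1 t.2) 0 = max (-1 * e.2.2 t.1 t.2) 0 + e.2.2 t.1 t.2 := by
        rcases le_total 0 (e.2.2 t.1 t.2) with h | h
        · rw [max_eq_left (by linarith), max_eq_right (by linarith)]; ring
        · rw [max_eq_right (by linarith), max_eq_left (by linarith)]; ring
      rw [this, pt]; ring
    · have : UU φ = fun e : Cfg I J => ∑ t : I × J,
          (max (1 * e.2.2 t.1 t.2) 0 * φ (pt t e) - max (-1 * e.2.2 t.1 t.2) 0 * φ (pt t e)) := by
        ext e
        unfold UU
        rw [← Fintype.sum_prod_type' (f := fun i j => e.2.2 i j * φ (e.1 i, e.2.1 j))]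
        refine Finset.sum_congr rfl fun t _ => ?_
        have : max (1 * e.2.2 t.1 t.2) 0 = max (-1 * e.2.2 t.1 t.2) 0 + e.2.2 t.1 t.2 := by
          rcases le_total 0 (e.2.2 t.1 t.2) with h | h
          · rw [max_eq_left (by linarith), max_eq_right (by linarith)]; ring
          · rw [max_eq_right (by linarith), max_eq_left (by linarith)]; ring
        rw [this, pt]; ring
      rw [this]
      exact integrable_finsetSum _ fun t _ => (h1 t).2.2.sub (h2 t).2.2

lemma bet_finite (κ : Measure (Cfg I J)) [IsFiniteMeasure κ] (s : ℝ) (hs : |s| = 1)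
    (hu : ∀ᵐ e ∂κ, ∀ i j, |e.2.2 i j| ≤ 1) : IsFiniteMeasure (bet κ s) := by
  have : ∀ t, IsFiniteMeasure (bpart κ s t) := fun t =>
    isFiniteMeasure_of_le _ (bpart_le κ s hs t hu)
  unfold bet
  infer_instance

/-- The alternative of a nontrivial measure on bad configurations is impossible. -/
lemma no_kappa (μ ν : Measure ℝ) (c c' : ℝ × ℝ → ℝ) (hc : Measurable c) (hc' : Measurable c')
    (π : Measure (ℝ × ℝ)) (hπ : IsMartingaleCoupling μ ν π)
    (hfin : Integrable c π) (hfin' : Integrable c' π)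
    (hmin : ∀ π' : Measure (ℝ × ℝ), IsMartingaleCoupling μ ν π' →
      Integrable c π' → ∫ p, c p ∂π ≤ ∫ p, c p ∂π')
    (hmax : ∀ π' : Measure (ℝ × ℝ), IsMartingaleCoupling μ ν π' →
      Integrable c π' → ∫ p, c p ∂π' = ∫ p, c p ∂π →
      Integrable c' π' → ∫ p, c' p ∂π' ≤ ∫ p, c' p ∂π)
    (T : Finset (I × J)) (M : ℝ) (κ : Measure (Cfg I J)) [IsFiniteMeasure κ] (hκ0 : κ ≠ 0)
    (hκB : κ (Bad c c' T M)ᶜ = 0)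
    (hκ : ∀ t ∈ T, κ.map (pt t) ≤ ((Fintype.card (I × J) + 1 : ENNReal))⁻¹ • π) : False := by
  obtain ⟨hprob, hπ1, hπ2, hmart⟩ := hπ
  have hB : ∀ᵐ e ∂κ, e ∈ Bad c c' T M := by
    rw [ae_iff]; exact hκB
  have hu : ∀ᵐ e ∂κ, ∀ i j, |e.2.2 i j| ≤ 1 := hB.mono fun e he => he.1
  have f1 := bet_finite κ 1 (by simp) hu
  have f2 := bet_finite κ (-1) (by simp) hu
  have hle : bet κ (-1) ≤ π := by
    have hK : ∀ t, bpart κ (-1) t ≤ ((Fintype.card (I × J) + 1 : ENNReal))⁻¹ • π := by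
      intro t
      by_cases ht : t ∈ T
      · exact (bpart_le κ (-1) (by simp) t hu).trans (hκ t ht)
      · have : κ.withDensity (fun e => ENNReal.ofReal (-1 * e.2.2 t.1 t.2)) = 0 := by
          rw [withDensity_eq_zero_iff (by fun_prop)]
          filter_upwards [hB] with e he
          have := he.2.1 t.1 t.2 ht
          simpa using this
        rw [bpart, this, Measure.map_zero]
        exact Measure.zero_le _
    calc bet κ (-1) ≤ ∑ _t : I × J, ((Fintype.card (I × J) + 1 : ENNReal))⁻¹ • π :=
          Finset.sum_le_sum fun t _ => hK t
      _ = (Fintype.card (I × J) * ((Fintype.card (I × J) + 1 : ENNReal))⁻¹) • π := by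
        rw [Finset.sum_const, Finset.card_univ, ← Nat.cast_smul_eq_nsmul ENNReal, smul_smul]
      _ ≤ (1 : ENNReal) • π := by
        refine Measure.le_iff.2 fun s _ => ?_
        simp only [Measure.smul_apply, smul_eq_mul]
        refine mul_le_mul_left ?_ _
        rw [← div_eq_mul_inv]
        exact ENNReal.div_le_of_le_mul (by rw [one_mul]; exact le_self_add)
      _ = π := one_smul _ _
  have hsub := Measure.sub_add_cancel_of_le hle
  set σ := π - bet κ (-1) with hσ
  set π' := σ + bet κ 1 with hπ'
  have hσf : IsFiniteMeasure σ := isFiniteMeasure_of_le π Measure.sub_le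
  have transfer : ∀ φ : ℝ × ℝ → ℝ, Measurable φ → ∀ C, (∀ᵐ e ∂κ, ∀ t, |φ (pt t e)| ≤ C) →
      (Integrable φ π' ↔ Integrable φ π) ∧
      (Integrable φ π → ∫ z, φ z ∂π' = ∫ z, φ z ∂π + ∫ e, UU φ e ∂κ) := by
    intro φ hφ C hC
    obtain ⟨i1, i2, heq⟩ := bet_int κ hu φ hφ C hC
    have e1 : Integrable φ π' ↔ Integrable φ σ := by
      rw [hπ', integrable_add_measure]; exact and_iff_left i1
    have e2 : Integrable φ π ↔ Integrable φ σ := by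
      rw [← hsub, integrable_add_measure]; exact and_iff_left i2
    refine ⟨e1.trans e2.symm, fun h => ?_⟩
    have h3 := e2.1 h
    rw [hπ', integral_add_measure h3 i1, ← hsub, integral_add_measure h3 i2, heq]
    ring
  have real_eq : ∀ A : Set (ℝ × ℝ), MeasurableSet A →
      (∀ᵐ e ∂κ, UU (A.indicator fun _ => (1 : ℝ)) e = 0) → π' A = π A := by
    intro A hA hU
    have hm : Measurable (A.indicator fun _ => (1 : ℝ)) := measurable_const.indicator hA
    obtain ⟨_, h2⟩ := transfer _ hm 1 (Eventually.of_forall fun e t => by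
      by_cases h : pt t e ∈ A <;> simp [h])
    have h3 := h2 ((integrable_const 1).indicator hA)
    rw [integral_congr_ae hU, integral_indicator_const _ hA, integral_indicator_const _ hA] at h3
    simp only [smul_eq_mul, mul_one, integral_zero, add_zero] at h3
    rwa [measureReal_eq_measureReal_iff] at h3
  have hprob' : IsProbabilityMeasure π' := by
    refine ⟨?_⟩
    rw [real_eq Set.univ MeasurableSet.univ]
    · exact measure_univ
    · filter_upwards [hB] with e he
      simp only [UU, Set.indicator_univ, mul_one]
      exact Finset.sum_eq_zero fun i _ => he.2.2.1 i
  have hcoup : IsMartingaleCoupling μ ν π' := by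
    refine ⟨hprob', ?_, ?_, ?_⟩
    · rw [← hπ1]
      ext A hA
      rw [Measure.map_apply measurable_fst hA, Measure.map_apply measurable_fst hA]
      refine real_eq _ (measurable_fst hA) ?_
      filter_upwards [hB] with e he
      refine Finset.sum_eq_zero fun i _ => ?_
      have : ∀ j, (Prod.fst ⁻¹' A).indicator (fun _ => (1 : ℝ)) (e.1 i, e.2.1 j)
          = A.indicator (fun _ => 1) (e.1 i) := fun j => rfl
      simp only [this]
      rw [← Finset.sum_mul, he.2.2.1 i, zero_mul]
    · rw [← hπ2]
      ext A hA
      rw [Measure.map_apply measurable_snd hA, Measure.map_apply measurable_snd hA]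
      refine real_eq _ (measurable_snd hA) ?_
      filter_upwards [hB] with e he
      rw [UU, Finset.sum_comm]
      refine Finset.sum_eq_zero fun j _ => ?_
      have : ∀ i, (Prod.snd ⁻¹' A).indicator (fun _ => (1 : ℝ)) (e.1 i, e.2.1 j)
          = A.indicator (fun _ => 1) (e.2.1 j) := fun i => rfl
      simp only [this]
      rw [← Finset.sum_mul, he.2.2.2.1 j, zero_mul]
    · intro h hh ⟨C, hC⟩
      by_cases hintg : Integrable (fun p : ℝ × ℝ => h p.1 * (p.2 - p.1)) π'
      swap
      · exact integral_undef hintg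
      obtain ⟨h1, h2⟩ := transfer (fun p : ℝ × ℝ => h p.1 * (p.2 - p.1)) (by fun_prop)
        (C * (M + M)) (by
          filter_upwards [hB] with e he t
          obtain ⟨b1, b2, _, _⟩ := he.2.2.2.2.2.1 t.1 t.2
          simp only [pt]
          rw [abs_mul]
          refine mul_le_mul (hC _) ((abs_sub _ _).trans (add_le_add b2 b1)) (abs_nonneg _)
            ((abs_nonneg _).trans (hC 0)))
      rw [h2 (h1.1 hintg), hmart h hh ⟨C, hC⟩, zero_add]
      refine integral_eq_zero_of_ae ?_
      filter_upwards [hB] with e he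
      refine Finset.sum_eq_zero fun i _ => ?_
      have : ∀ j, e.2.2 i j * (h (e.1 i) * (e.2.1 j - e.1 i))
          = h (e.1 i) * (e.2.2 i j * e.2.1 j) - h (e.1 i) * e.1 i * e.2.2 i j := fun j => by ring
      simp only [this]
      rw [Finset.sum_sub_distrib, ← Finset.mul_sum, ← Finset.mul_sum, he.2.2.1 i, he.2.2.2.2.1 i]
      ring
  obtain ⟨c1, c2⟩ := transfer c hc M (by
    filter_upwards [hB] with e he t using (he.2.2.2.2.2.1 t.1 t.2).2.2.1)
  obtain ⟨c1', c2'⟩ := transfer c' hc' M (by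
    filter_upwards [hB] with e he t using (he.2.2.2.2.2.1 t.1 t.2).2.2.2)
  have hUb : ∀ φ : ℝ × ℝ → ℝ, Measurable φ → (∀ᵐ e ∂κ, ∀ t, |φ (pt t e)| ≤ M) →
      Integrable (fun e : Cfg I J => UU φ e) κ := by
    intro φ hφ hM
    refine Integrable.of_bound (UU_meas hφ).aestronglyMeasurable (∑ _i : I, ∑ _j : J, 1 * M) ?_
    filter_upwards [hu, hM] with e he1 he2
    refine (norm_sum_le _ _).trans (Finset.sum_le_sum fun i _ => ?_)
    refine (norm_sum_le _ _).trans (Finset.sum_le_sum fun j _ => ?_)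
    rw [Real.norm_eq_abs, abs_mul]
    exact mul_le_mul (he1 i j) (he2 (i, j)) (abs_nonneg _) zero_le_one
  have iU := hUb c hc (by
    filter_upwards [hB] with e he t using (he.2.2.2.2.2.1 t.1 t.2).2.2.1)
  have iU' := hUb c' hc' (by
    filter_upwards [hB] with e he t using (he.2.2.2.2.2.1 t.1 t.2).2.2.2)
  have m1 := hmin π' hcoup (c1.2 hfin)
  rw [c2 hfin] at m1
  have hUle : ∀ᵐ e ∂κ, 0 ≤ -UU c e := by
    filter_upwards [hB] with e he
    rcases he.2.2.2.2.2.2 with h | h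
    · linarith
    · linarith [h.1]
  have hUneg : 0 ≤ ∫ e, -UU c e ∂κ := integral_nonneg_of_ae hUle
  rw [integral_neg] at hUneg
  have hU0 : ∫ e, UU c e ∂κ = 0 := by linarith
  have hUz := (integral_eq_zero_iff_of_nonneg_ae hUle iU.neg).1 (by
    show ∫ e, -UU c e ∂κ = 0
    rw [integral_neg, hU0, neg_zero])
  have m2 := hmax π' hcoup (c1.2 hfin) (by rw [c2 hfin, hU0, add_zero]) (c1'.2 hfin')
  rw [c2' hfin'] at m2
  have hpos : ∀ᵐ e ∂κ, 0 < UU c' e := by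
    filter_upwards [hB, hUz] with e he hz
    have hz' : -UU c e = 0 := hz
    rcases he.2.2.2.2.2.2 with h | h
    · linarith
    · exact h.2
  have hz2 := (integral_eq_zero_iff_of_nonneg_ae (hpos.mono fun e he => he.le) iU').1
    (le_antisymm (by linarith) (integral_nonneg_of_ae (hpos.mono fun e he => he.le)))
  have : ∀ᵐ e ∂κ, False := by
    filter_upwards [hpos, hz2] with e h1 h2
    have h2' : UU c' e = 0 := h2
    linarith
  rw [ae_iff] at this
  simp at this
  exact hκ0 this

end Kel
namespace Kel
open MeasureTheory Filter Topology

variable {I J : Type} [Fintype I] [Fintype J]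

lemma grid_int (m : Measure (ℝ × ℝ)) [IsFiniteMeasure m] (x : I → ℝ) (y : J → ℝ)
    (hx : Function.Injective x) (hy : Function.Injective y)
    (hm : m {p | p.1 ∈ Set.range x ∧ p.2 ∈ Set.range y}ᶜ = 0) (φ : ℝ × ℝ → ℝ) :
    ∫ p, φ p ∂m = ∑ i, ∑ j, m.real {(x i, y j)} * φ (x i, y j) := by
  classical
  set F : Finset (ℝ × ℝ) := Finset.univ.image (fun t : I × J => (x t.1, y t.2)) with hF
  have hFs : {p : ℝ × ℝ | p.1 ∈ Set.range x ∧ p.2 ∈ Set.range y} = (F : Set (ℝ × ℝ)) := by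
    ext p
    simp only [hF, Set.mem_setOf_eq, Set.mem_range, Finset.coe_image, Finset.coe_univ,
      Set.image_univ, Prod.exists]
    constructor
    · rintro ⟨⟨i, hi⟩, ⟨j, hj⟩⟩
      exact ⟨i, j, by rw [hi, hj]⟩
    · rintro ⟨i, j, h⟩
      rw [← h]
      exact ⟨⟨i, rfl⟩, ⟨j, rfl⟩⟩
  rw [hFs] at hm
  have h1 : ∫ p, φ p ∂m = ∫ p in (F : Set (ℝ × ℝ)), φ p ∂m := by
    rw [Measure.restrict_eq_self_of_ae_mem]
    rw [ae_iff]; exact hm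
  rw [h1, setIntegral_finset _ IntegrableOn.finset, hF, Finset.sum_image, Fintype.sum_prod_type]
  · rfl
  · rintro ⟨i, j⟩ _ ⟨i', j'⟩ _ h
    simp only [Prod.mk.injEq] at h ⊢
    exact ⟨hx h.1, hy h.2⟩

/-- Bad configurations are avoided on a set of full measure. -/
lemma exists_good (μ ν : Measure ℝ) (c c' : ℝ × ℝ → ℝ) (hc : Measurable c) (hc' : Measurable c')
    (π : Measure (ℝ × ℝ)) (hπ : IsMartingaleCoupling μ ν π)
    (hfin : Integrable c π) (hfin' : Integrable c' π)
    (hmin : ∀ π' : Measure (ℝ × ℝ), IsMartingaleCoupling μ ν π' →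
      Integrable c π' → ∫ p, c p ∂π ≤ ∫ p, c p ∂π')
    (hmax : ∀ π' : Measure (ℝ × ℝ), IsMartingaleCoupling μ ν π' →
      Integrable c π' → ∫ p, c p ∂π' = ∫ p, c p ∂π →
      Integrable c' π' → ∫ p, c' p ∂π' ≤ ∫ p, c' p ∂π)
    (T : Finset (I × J)) (M : ℝ) :
    ∃ Γ, MeasurableSet Γ ∧ π Γᶜ = 0 ∧ ∀ e ∈ Bad c c' T M, ∃ t ∈ T, pt t e ∉ Γ := by
  have hprob := hπ.1
  have hs0 : ((Fintype.card (I × J) + 1 : ENNReal))⁻¹ ≠ 0 := by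
    apply ENNReal.inv_ne_zero.2
    exact ENNReal.add_ne_top.2 ⟨ENNReal.natCast_ne_top _, ENNReal.one_ne_top⟩
  have hst : ((Fintype.card (I × J) + 1 : ENNReal))⁻¹ ≠ ⊤ := by
    apply ENNReal.inv_ne_top.2
    simp
  have : IsFiniteMeasure (((Fintype.card (I × J) + 1 : ENNReal))⁻¹ • π) :=
    Measure.smul_finite π hst
  rcases kellerer (ι := T) (((Fintype.card (I × J) + 1 : ENNReal))⁻¹ • π) (fun t => pt t.1)
    (fun t => pt_cont t.1) (Bad c c' T M) (Bad_meas hc hc' T M) with ⟨Γ, h1, h2, h3⟩ | ⟨κ, h1, h2, h3, h4⟩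
  · refine ⟨Γ, h1, ?_, ?_⟩
    · rw [Measure.smul_apply, smul_eq_mul, mul_eq_zero] at h2
      exact h2.resolve_left hs0
    · intro e he
      obtain ⟨t, ht⟩ := h3 e he
      exact ⟨t.1, t.2, ht⟩
  · exact (no_kappa μ ν c c' hc hc' π hπ hfin hfin' hmin hmax T M κ h2 h3
      (fun t ht => h4 ⟨t, ht⟩)).elim

lemma sum_pick [DecidableEq I] (i : I) (f : I → ℝ) (P : I → Prop) [DecidablePred P]
    (hP : ∀ i', P i' ↔ i' = i) : (∑ i', if P i' then f i' else 0) = f i := by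
  simp [hP]

lemma bad_of_viol (c c' : ℝ × ℝ → ℝ) (x : I → ℝ) (y : J → ℝ)
    (hx : Function.Injective x) (hy : Function.Injective y)
    (α α' : Measure (ℝ × ℝ)) [IsFiniteMeasure α] [IsFiniteMeasure α'] (T : Finset (I × J))
    (hα : α {p | p.1 ∈ Set.range x ∧ p.2 ∈ Set.range y}ᶜ = 0)
    (hα' : α' {p | p.1 ∈ Set.range x ∧ p.2 ∈ Set.range y}ᶜ = 0)
    (hT : ∀ i j, (i, j) ∉ T → α.real {(x i, y j)} = 0)
    (h1 : α'.map Prod.fst = α.map Prod.fst) (h2 : α'.map Prod.snd = α.map Prod.snd)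
    (hb : ∀ x : ℝ, ∫ p in {p : ℝ × ℝ | p.1 = x}, p.2 ∂α' =
      ∫ p in {p : ℝ × ℝ | p.1 = x}, p.2 ∂α)
    (hv : ∫ p, c p ∂α' < ∫ p, c p ∂α ∨ (∫ p, c p ∂α' = ∫ p, c p ∂α ∧ ∫ p, c' p ∂α < ∫ p, c' p ∂α')) :
    ∃ (M : ℕ) (u : I → J → ℝ), ((x, y, u) : Cfg I J) ∈ Bad c c' T M := by
  classical
  set K : ℝ := α.real Set.univ + α'.real Set.univ + 1 with hK
  have ha0 : 0 ≤ α.real Set.univ := measureReal_nonneg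
  have ha0' : 0 ≤ α'.real Set.univ := measureReal_nonneg
  have hK0 : 0 < K := by linarith
  have hr : 0 < K⁻¹ := inv_pos.2 hK0
  set u : I → J → ℝ := fun i j => K⁻¹ * (α'.real {(x i, y j)} - α.real {(x i, y j)}) with hu
  have key : ∀ φ : ℝ × ℝ → ℝ, ∑ i, ∑ j, u i j * φ (x i, y j) =
      K⁻¹ * (∫ p, φ p ∂α' - ∫ p, φ p ∂α) := by
    intro φ
    rw [grid_int α x y hx hy hα, grid_int α' x y hx hy hα', ← Finset.sum_sub_distrib,
      Finset.mul_sum]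
    refine Finset.sum_congr rfl fun i _ => ?_
    rw [← Finset.sum_sub_distrib, Finset.mul_sum]
    refine Finset.sum_congr rfl fun j _ => ?_
    simp only [hu]; ring
  have bnd : ∀ f : I → J → ℝ, ∃ B : ℝ, ∀ i j, |f i j| ≤ B := by
    intro f
    refine ⟨∑ i, ∑ j, |f i j|, fun i j => ?_⟩
    calc |f i j| ≤ ∑ j, |f i j| :=
          Finset.single_le_sum (f := fun j => |f i j|) (fun _ _ => abs_nonneg _) (Finset.mem_univ j)
      _ ≤ _ := Finset.single_le_sum (f := fun i => ∑ j, |f i j|)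
          (fun _ _ => Finset.sum_nonneg fun _ _ => abs_nonneg _) (Finset.mem_univ i)
  obtain ⟨B1, hB1⟩ := bnd fun i _ => x i
  obtain ⟨B2, hB2⟩ := bnd fun _ j => y j
  obtain ⟨B3, hB3⟩ := bnd fun i j => c (x i, y j)
  obtain ⟨B4, hB4⟩ := bnd fun i j => c' (x i, y j)
  obtain ⟨M, hM⟩ := exists_nat_ge (max (max B1 B2) (max B3 B4))
  have hM1 : B1 ≤ M := le_trans (le_trans (le_max_left _ _) (le_max_left _ _)) hM
  have hM2 : B2 ≤ M := le_trans (le_trans (le_max_right _ _) (le_max_left _ _)) hM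
  have hM3 : B3 ≤ M := le_trans (le_trans (le_max_left _ _) (le_max_right _ _)) hM
  have hM4 : B4 ≤ M := le_trans (le_trans (le_max_right _ _) (le_max_right _ _)) hM
  refine ⟨M, u, ?_, ?_, ?_, ?_, ?_, ?_, ?_⟩
  · intro i j
    have e1 : α.real {(x i, y j)} ≤ α.real Set.univ := measureReal_mono (Set.subset_univ _)
    have e2 : α'.real {(x i, y j)} ≤ α'.real Set.univ := measureReal_mono (Set.subset_univ _)
    have e3 : 0 ≤ α.real {(x i, y j)} := measureReal_nonneg
    have e4 : 0 ≤ α'.real {(x i, y j)} := measureReal_nonneg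
    simp only [hu]
    rw [abs_mul, abs_of_pos hr, inv_mul_le_iff₀ hK0, abs_le]
    constructor <;> linarith
  · intro i j hij
    simp only [hu, hT i j hij, sub_zero]
    exact mul_nonneg hr.le measureReal_nonneg
  · intro i
    have := key (Set.indicator {p | p.1 = x i} 1)
    have hms : MeasurableSet {p : ℝ × ℝ | p.1 = x i} := measurable_fst (measurableSet_singleton (x i))
    have e : α'.real {p : ℝ × ℝ | p.1 = x i} = α.real {p : ℝ × ℝ | p.1 = x i} := by
      have := congrArg (fun m => m.real {x i}) h1
      simp only [map_measureReal_apply measurable_fst (measurableSet_singleton (x i))] at this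
      exact this
    rw [integral_indicator_one hms, integral_indicator_one hms, e, sub_self, mul_zero] at this
    rw [← this, Finset.sum_comm]
    refine Finset.sum_congr rfl fun j _ => ?_
    change u i j = _
    rw [← sum_pick i (fun i' => u i' j) (fun i' => x i' = x i) (fun i' => hx.eq_iff)]
    refine Finset.sum_congr rfl fun i' _ => ?_
    simp [Set.indicator_apply]
  · intro j
    have := key (Set.indicator {p | p.2 = y j} 1)
    have hms : MeasurableSet {p : ℝ × ℝ | p.2 = y j} := measurable_snd (measurableSet_singleton (y j))
    have e : α'.real {p : ℝ × ℝ | p.2 = y j} = α.real {p : ℝ × ℝ | p.2 = y j} := by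
      have := congrArg (fun m => m.real {y j}) h2
      simp only [map_measureReal_apply measurable_snd (measurableSet_singleton (y j))] at this
      exact this
    rw [integral_indicator_one hms, integral_indicator_one hms, e, sub_self, mul_zero] at this
    rw [← this]
    refine Finset.sum_congr rfl fun i _ => ?_
    change u i j = _
    rw [← sum_pick j (fun j' => u i j') (fun j' => y j' = y j) (fun j' => hy.eq_iff)]
    refine Finset.sum_congr rfl fun j' _ => ?_
    simp [Set.indicator_apply]
  · intro i
    have := key (Set.indicator {p | p.1 = x i} (fun p => p.2))
    have hms : MeasurableSet {p : ℝ × ℝ | p.1 = x i} := measurable_fst (measurableSet_singleton (x i))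
    rw [integral_indicator hms, integral_indicator hms, hb, sub_self, mul_zero] at this
    rw [← this, Finset.sum_comm]
    refine Finset.sum_congr rfl fun j _ => ?_
    change u i j * y j = _
    rw [← sum_pick i (fun i' => u i' j * y j) (fun i' => x i' = x i) (fun i' => hx.eq_iff)]
    refine Finset.sum_congr rfl fun i' _ => ?_
    simp [Set.indicator_apply]
  · intro i j
    exact ⟨(hB1 i j).trans hM1, (hB2 i j).trans hM2, (hB3 i j).trans hM3, (hB4 i j).trans hM4⟩
  · have k1 : UU c ((x, y, u) : Cfg I J) = K⁻¹ * (∫ p, c p ∂α' - ∫ p, c p ∂α) := key c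
    have k2 : UU c' ((x, y, u) : Cfg I J) = K⁻¹ * (∫ p, c' p ∂α' - ∫ p, c' p ∂α) := key c'
    rw [k1, k2]
    rcases hv with hv | ⟨hv, hv'⟩
    · exact Or.inl (mul_neg_of_pos_of_neg hr (by linarith))
    · exact Or.inr ⟨by rw [hv, sub_self, mul_zero], mul_pos hr (by linarith)⟩

lemma main (μ ν : Measure ℝ) (c c' : ℝ × ℝ → ℝ) (hc : Measurable c) (hc' : Measurable c')
    (π : Measure (ℝ × ℝ)) (hπ : IsMartingaleCoupling μ ν π)
    (hfin : Integrable c π) (hfin' : Integrable c' π)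
    (hmin : ∀ π' : Measure (ℝ × ℝ), IsMartingaleCoupling μ ν π' →
      Integrable c π' → ∫ p, c p ∂π ≤ ∫ p, c p ∂π')
    (hmax : ∀ π' : Measure (ℝ × ℝ), IsMartingaleCoupling μ ν π' →
      Integrable c π' → ∫ p, c p ∂π' = ∫ p, c p ∂π →
      Integrable c' π' → ∫ p, c' p ∂π' ≤ ∫ p, c' p ∂π) :
    ∃ Γ : Set (ℝ × ℝ), MeasurableSet Γ ∧ π Γ = 1 ∧
      ∀ α : Measure (ℝ × ℝ), IsFiniteMeasure α → HasFiniteSupportIn α Γ →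
        ∀ α' : Measure (ℝ × ℝ), IsCompetitor α α' →
          ¬ (∫ p, c p ∂α' < ∫ p, c p ∂α ∨
            (∫ p, c p ∂α' = ∫ p, c p ∂α ∧ ∫ p, c' p ∂α < ∫ p, c' p ∂α')) := by
  classical
  have hprob := hπ.1
  have H := fun (k l : ℕ) (T : Finset (Fin k × Fin l)) (M : ℕ) =>
    exists_good μ ν c c' hc hc' π hπ hfin hfin' hmin hmax T (M : ℝ)
  choose G hG1 hG2 hG3 using H
  have hmeas : MeasurableSet (⋂ k, ⋂ l, ⋂ T, ⋂ M, G k l T M) :=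
    MeasurableSet.iInter fun k => MeasurableSet.iInter fun l => MeasurableSet.iInter fun T =>
      MeasurableSet.iInter fun M => hG1 k l T M
  refine ⟨⋂ k, ⋂ l, ⋂ T, ⋂ M, G k l T M, hmeas, ?_, ?_⟩
  · rw [← prob_compl_eq_zero_iff hmeas]
    simp only [Set.compl_iInter, measure_iUnion_null_iff]
    exact hG2
  · rintro α hαfin ⟨S, hSΓ, hS⟩ α' ⟨-, h1, h2, hb⟩ hv
    have hα'fin : IsFiniteMeasure α' := by
      constructor
      have := congrArg (fun m => m Set.univ) h1
      simp only [Measure.map_apply measurable_fst MeasurableSet.univ, Set.preimage_univ] at this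
      rw [this]
      exact measure_lt_top _ _
    set X := S.image Prod.fst with hX
    set Y := S.image Prod.snd with hY
    set x : Fin X.card → ℝ := fun i => X.equivFin.symm i with hx
    set y : Fin Y.card → ℝ := fun i => Y.equivFin.symm i with hy
    have hxi : Function.Injective x := Subtype.val_injective.comp X.equivFin.symm.injective
    have hyi : Function.Injective y := Subtype.val_injective.comp Y.equivFin.symm.injective
    have hxr : Set.range x = X := by
      have : x = Subtype.val ∘ X.equivFin.symm := rfl
      rw [this, X.equivFin.symm.surjective.range_comp]
      simp
    have hyr : Set.range y = Y := by
      have : y = Subtype.val ∘ Y.equivFin.symm := rfl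
      rw [this, Y.equivFin.symm.surjective.range_comp]
      simp
    have hX0 : α (Prod.fst ⁻¹' (X : Set ℝ)ᶜ) = 0 := by
      refine measure_mono_null ?_ hS
      intro p hp hpS
      exact hp (by simp only [hX, Finset.coe_image]; exact ⟨p, hpS, rfl⟩)
    have hY0 : α (Prod.snd ⁻¹' (Y : Set ℝ)ᶜ) = 0 := by
      refine measure_mono_null ?_ hS
      intro p hp hpS
      exact hp (by simp only [hY, Finset.coe_image]; exact ⟨p, hpS, rfl⟩)
    have hX0' : α' (Prod.fst ⁻¹' (X : Set ℝ)ᶜ) = 0 := by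
      rw [← Measure.map_apply measurable_fst X.measurableSet.compl, h1,
        Measure.map_apply measurable_fst X.measurableSet.compl, hX0]
    have hY0' : α' (Prod.snd ⁻¹' (Y : Set ℝ)ᶜ) = 0 := by
      rw [← Measure.map_apply measurable_snd Y.measurableSet.compl, h2,
        Measure.map_apply measurable_snd Y.measurableSet.compl, hY0]
    have hsub : {p : ℝ × ℝ | p.1 ∈ Set.range x ∧ p.2 ∈ Set.range y}ᶜ ⊆
        Prod.fst ⁻¹' (X : Set ℝ)ᶜ ∪ Prod.snd ⁻¹' (Y : Set ℝ)ᶜ := by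
      intro p hp
      rw [hxr, hyr] at hp
      by_contra hcon
      simp only [Set.mem_union, Set.mem_preimage, Set.mem_compl_iff, not_or, not_not] at hcon
      exact hp hcon
    set T : Finset (Fin X.card × Fin Y.card) :=
      Finset.univ.filter (fun t => (x t.1, y t.2) ∈ S) with hT
    obtain ⟨M, u, hu⟩ := bad_of_viol c c' x y hxi hyi α α' T
      (measure_mono_null hsub (measure_union_null hX0 hY0))
      (measure_mono_null hsub (measure_union_null hX0' hY0'))
      (by
        intro i j hij
        have hn : (x i, y j) ∉ S := by simpa [hT] using hij
        have : α {(x i, y j)} = 0 := by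
          refine measure_mono_null ?_ hS
          intro p hp
          rw [Set.mem_singleton_iff] at hp
          rw [hp]
          exact hn
        simp [measureReal_def, this])
      h1 h2 hb hv
    obtain ⟨t, htT, ht⟩ := hG3 _ _ T M _ hu
    have htS : (x t.1, y t.2) ∈ S := by simpa [hT] using htT
    have := hSΓ htS
    simp only [Set.mem_iInter] at this
    exact ht (this _ _ T M)

end Kel

/-- Modified variational lemma with a secondary optimisation: a `c`-minimising
martingale transport plan which, among all `c`-minimisers, maximises `c'`, is
concentrated on a Borel set `Γ` on which no competitor can decrease the `c`-cost,
and any competitor leaving the `c`-cost unchanged cannot increase the `c'`-cost. -/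
theorem modified_variational_lemma
    (μ ν : Measure ℝ) [IsProbabilityMeasure μ] [IsProbabilityMeasure ν]
    (hconv : InConvexOrder μ ν)
    (c c' : ℝ → ℝ → ℝ)
    (hc : Measurable (fun p : ℝ × ℝ => c p.1 p.2))
    (hc' : Measurable (fun p : ℝ × ℝ => c' p.1 p.2))
    (a b : ℝ → ℝ) (ha : Integrable a μ) (hb : Integrable b ν)
    (hlower : ∀ x y : ℝ, a x + b y ≤ c x y)
    (f g : ℝ → ℝ) (hf : Integrable f μ) (hg : Integrable g ν)
    (hupper : ∀ x y : ℝ, c' x y ≤ f x + g y)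
    (π : Measure (ℝ × ℝ)) (hπ : IsMartingaleCoupling μ ν π)
    (hfin : Integrable (fun p : ℝ × ℝ => c p.1 p.2) π)
    (hfin' : Integrable (fun p : ℝ × ℝ => c' p.1 p.2) π)
    (hmin : ∀ π' : Measure (ℝ × ℝ), IsMartingaleCoupling μ ν π' →
      Integrable (fun p : ℝ × ℝ => c p.1 p.2) π' →
      ∫ p : ℝ × ℝ, c p.1 p.2 ∂π ≤ ∫ p : ℝ × ℝ, c p.1 p.2 ∂π')
    (hmax : ∀ π' : Measure (ℝ × ℝ), IsMartingaleCoupling μ ν π' →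
      Integrable (fun p : ℝ × ℝ => c p.1 p.2) π' →
      ∫ p : ℝ × ℝ, c p.1 p.2 ∂π' = ∫ p : ℝ × ℝ, c p.1 p.2 ∂π →
      Integrable (fun p : ℝ × ℝ => c' p.1 p.2) π' →
      ∫ p : ℝ × ℝ, c' p.1 p.2 ∂π' ≤ ∫ p : ℝ × ℝ, c' p.1 p.2 ∂π) :
    ∃ Γ : Set (ℝ × ℝ), MeasurableSet Γ ∧ π Γ = 1 ∧
      ∀ α : Measure (ℝ × ℝ), IsFiniteMeasure α → HasFiniteSupportIn α Γ →
        ∀ α' : Measure (ℝ × ℝ), IsCompetitor α α' →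
          (∫ p : ℝ × ℝ, c p.1 p.2 ∂α ≤ ∫ p : ℝ × ℝ, c p.1 p.2 ∂α') ∧
          (∫ p : ℝ × ℝ, c p.1 p.2 ∂α = ∫ p : ℝ × ℝ, c p.1 p.2 ∂α' →
            ∫ p : ℝ × ℝ, c' p.1 p.2 ∂α' ≤ ∫ p : ℝ × ℝ, c' p.1 p.2 ∂α) := by
  obtain ⟨Γ, h1, h2, h3⟩ := Kel.main μ ν (fun p => c p.1 p.2) (fun p => c' p.1 p.2) hc hc' π hπ
    hfin hfin' hmin hmax
  refine ⟨Γ, h1, h2, fun α hα hS α' hα' => ?_⟩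
  have h := h3 α hα hS α' hα'
  constructor
  · by_contra hcon
    exact h (Or.inl (not_le.1 hcon))
  · intro he
    by_contra hcon
    exact h (Or.inr ⟨he.symm, not_le.1 hcon⟩)
end
end

section
/- Let k be a positive integer and Γ ⊆ ℝ². For a ∈ ℝ set Γ_a := {b ∈ ℝ : (a,b) ∈ Γ}, and assume there are uncountably many a ∈ ℝ with |Γ_a| ≥ k. Then there exist a ∈ ℝ and b₁ < b₂ < ⋯ < b_k in Γ_a such that for every ε > 0: (1) there exist a' > a and b₁' < ⋯ < b_k' in Γ_{a'} with max(|a−a'|, |b₁−b₁'|, …, |b_k−b_k'|) < ε, and (2) there exist a'' < a and b₁'' < ⋯ < b_k'' in Γ_{a''} with max(|a−a''|, |b₁−b₁''|, …, |b_k−b_k''|) < ε. -/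
/-- Combinatorial lemma: if uncountably many vertical sections of `Γ ⊆ ℝ²` have at
least `k` elements, then there is a point `a` with `k` section elements
`b₁ < ⋯ < b_k` that can be approximated arbitrarily well both from the right
(`a' > a`) and from the left (`a'' < a`) by points with `k` section elements. -/
theorem section_accumulation_lemma (k : ℕ) (hk : 0 < k) (Γ : Set (ℝ × ℝ))
    (h : ¬ Set.Countable {a : ℝ | (k : ℕ∞) ≤ {b : ℝ | (a, b) ∈ Γ}.encard}) :
    ∃ a : ℝ, ∃ b : Fin k → ℝ, StrictMono b ∧ (∀ i, (a, b i) ∈ Γ) ∧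
      ∀ ε : ℝ, 0 < ε →
        (∃ a' : ℝ, a < a' ∧ ∃ b' : Fin k → ℝ, StrictMono b' ∧
          (∀ i, (a', b' i) ∈ Γ) ∧ |a - a'| < ε ∧ ∀ i, |b i - b' i| < ε) ∧
        (∃ a'' : ℝ, a'' < a ∧ ∃ b'' : Fin k → ℝ, StrictMono b'' ∧
          (∀ i, (a'', b'' i) ∈ Γ) ∧ |a - a''| < ε ∧ ∀ i, |b i - b'' i| < ε) := by
  classical
  set S : Set ℝ := {a : ℝ | (k : ℕ∞) ≤ {b : ℝ | (a, b) ∈ Γ}.encard} with hS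
  have hb : ∀ a : ℝ, ∃ b : Fin k → ℝ, a ∈ S → StrictMono b ∧ ∀ i, (a, b i) ∈ Γ := by
    intro a
    by_cases ha : a ∈ S
    · obtain ⟨t, ht, hc⟩ := Set.exists_subset_encard_eq (show (k : ℕ∞) ≤ _ from ha)
      have hf : t.Finite := Set.finite_of_encard_eq_coe hc
      have hcard : hf.toFinset.card = k := by
        rw [hf.encard_eq_coe_toFinset_card] at hc
        exact_mod_cast hc
      refine ⟨hf.toFinset.orderEmbOfFin hcard, fun _ => ⟨OrderEmbedding.strictMono _, fun i => ?_⟩⟩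
      have := Finset.orderEmbOfFin_mem hf.toFinset hcard i
      exact ht (hf.mem_toFinset.1 this)
    · exact ⟨fun _ => 0, fun h => absurd h ha⟩
  choose b hb using hb
  by_contra hcon
  apply h
  let f : ℝ → ℝ × (Fin k → ℝ) := fun a => (a, b a)
  let B := TopologicalSpace.countableBasis (ℝ × (Fin k → ℝ))
  have hB : B.Countable := TopologicalSpace.countable_countableBasis _
  have hcount : (⋃ U ∈ B, ({a | IsGreatest {x | x ∈ S ∧ f x ∈ U} a} ∪
      {a | IsLeast {x | x ∈ S ∧ f x ∈ U} a})).Countable := by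
    refine hB.biUnion fun U _ => Set.Countable.union ?_ ?_
    · exact Set.Subsingleton.countable fun x hx y hy => IsGreatest.unique hx hy
    · exact Set.Subsingleton.countable fun x hx y hy => IsLeast.unique hx hy
  refine hcount.mono fun a ha => ?_
  by_contra hna
  apply hcon
  refine ⟨a, b a, (hb a ha).1, (hb a ha).2, fun ε hε => ?_⟩
  obtain ⟨U, hU, haU, hUε⟩ := (TopologicalSpace.isBasis_countableBasis
    (ℝ × (Fin k → ℝ))).exists_subset_of_mem_open (Metric.mem_ball_self hε : f a ∈ Metric.ball (f a) ε)
    Metric.isOpen_ball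
  have hclose : ∀ x, f x ∈ U → |a - x| < ε ∧ ∀ i, |b a i - b x i| < ε := by
    intro x hx
    have h1 := hUε hx
    rw [Metric.mem_ball, dist_comm, Prod.dist_eq, max_lt_iff] at h1
    refine ⟨by simpa [f, Real.dist_eq] using h1.1, fun i => ?_⟩
    rw [← Real.dist_eq]
    exact (dist_le_pi_dist (b a) (b x) i).trans_lt h1.2
  simp only [Set.mem_iUnion, not_exists] at hna
  have hn := hna U hU
  constructor
  · by_contra hc
    refine hn (Or.inl ⟨⟨ha, haU⟩, fun x hx => ?_⟩)
    by_contra hlt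
    exact hc ⟨x, not_le.1 hlt, b x, (hb x hx.1).1, (hb x hx.1).2, hclose x hx.2⟩
  · by_contra hc
    refine hn (Or.inr ⟨⟨ha, haU⟩, fun x hx => ?_⟩)
    by_contra hlt
    exact hc ⟨x, not_le.1 hlt, b x, (hb x hx.1).1, (hb x hx.1).2, hclose x hx.2⟩
end

section
/- Let μ ⪯ ν be probability measures on ℝ in convex order and let Γ ⊆ ℝ² be a minimising monotonicity set for the pair of cost functions c(x,y) := |x+y| and c'(x,y) := |x+y|y². Let y⁻ < y < y⁺ be reals and λ ∈ [0,1] with y = (1−λ)y⁻ + λy⁺, and define f(t) := (1−λ)|t+y⁻| + λ|t+y⁺| − |t+y| and g(t) := (1−λ)|t+y⁻|(y⁻)² + λ|t+y⁺|(y⁺)² − |t+y|y². Then: (i) there are no x, x' ∈ ℝ with (x,y⁻), (x,y⁺), (x',y) ∈ Γ and f(x) > f(x'); (ii) there are no x, x' ∈ ℝ with (x,y⁻), (x,y⁺), (x',y) ∈ Γ, f(x) = f(x') and g(x) < g(x'). -/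
open MeasureTheory

noncomputable section

/-- `Γ` is a minimising monotonicity set for `(c, c')`: for every finitely
supported measure `α` with support in `Γ` and every competitor `α'` of `α`,
`∫ c dα ≤ ∫ c dα'`, and `∫ c dα = ∫ c dα'` implies `∫ c' dα ≥ ∫ c' dα'`. -/
def IsMinMonotonicitySet (c c' : ℝ → ℝ → ℝ) (Γ : Set (ℝ × ℝ)) : Prop :=
  ∀ α : Measure (ℝ × ℝ), IsFiniteMeasure α → HasFiniteSupportIn α Γ →
    ∀ α' : Measure (ℝ × ℝ), IsCompetitor α α' →
      (∫ p : ℝ × ℝ, c p.1 p.2 ∂α ≤ ∫ p : ℝ × ℝ, c p.1 p.2 ∂α') ∧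
      (∫ p : ℝ × ℝ, c p.1 p.2 ∂α = ∫ p : ℝ × ℝ, c p.1 p.2 ∂α' →
        ∫ p : ℝ × ℝ, c' p.1 p.2 ∂α' ≤ ∫ p : ℝ × ℝ, c' p.1 p.2 ∂α)

/-- `Γ` is a maximising monotonicity set for `(c, c')`: for every finitely
supported measure `α` with support in `Γ` and every competitor `α'` of `α`,
`∫ c dα ≥ ∫ c dα'`, and `∫ c dα = ∫ c dα'` implies `∫ c' dα ≤ ∫ c' dα'`. -/
def IsMaxMonotonicitySet (c c' : ℝ → ℝ → ℝ) (Γ : Set (ℝ × ℝ)) : Prop :=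
  ∀ α : Measure (ℝ × ℝ), IsFiniteMeasure α → HasFiniteSupportIn α Γ →
    ∀ α' : Measure (ℝ × ℝ), IsCompetitor α α' →
      (∫ p : ℝ × ℝ, c p.1 p.2 ∂α' ≤ ∫ p : ℝ × ℝ, c p.1 p.2 ∂α) ∧
      (∫ p : ℝ × ℝ, c p.1 p.2 ∂α = ∫ p : ℝ × ℝ, c p.1 p.2 ∂α' →
        ∫ p : ℝ × ℝ, c' p.1 p.2 ∂α ≤ ∫ p : ℝ × ℝ, c' p.1 p.2 ∂α')

def threeAtoms (a b : NNReal) (p q r : ℝ × ℝ) : Measure (ℝ × ℝ) :=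
  a • Measure.dirac p + b • Measure.dirac q + Measure.dirac r

lemma threeAtoms_integral (a b : NNReal) (p q r : ℝ × ℝ) (F : ℝ × ℝ → ℝ) :
    ∫ z, F z ∂(threeAtoms a b p q r) = a * F p + b * F q + F r := by
  have hd : ∀ z : ℝ × ℝ, Integrable F (Measure.dirac z) := fun z =>
    integrable_dirac (by simp)
  have hp : Integrable F (a • Measure.dirac p) := (hd p).smul_measure_nnreal
  have hq : Integrable F (b • Measure.dirac q) := (hd q).smul_measure_nnreal
  unfold threeAtoms
  rw [integral_add_measure (hp.add_measure hq) (hd r), integral_add_measure hp hq,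
    integral_smul_nnreal_measure, integral_smul_nnreal_measure]
  simp [NNReal.smul_def]

lemma threeAtoms_supp (a b : NNReal) (p q r : ℝ × ℝ) :
    threeAtoms a b p q r ((↑({p, q, r} : Finset (ℝ × ℝ)) : Set (ℝ × ℝ))ᶜ) = 0 := by
  have hm : MeasurableSet ((↑({p, q, r} : Finset (ℝ × ℝ)) : Set (ℝ × ℝ))ᶜ) :=
    (Finset.measurableSet _).compl
  simp only [threeAtoms, Measure.add_apply, Measure.smul_apply, Measure.dirac_apply' _ hm]
  simp

lemma threeAtoms_map (a b : NNReal) (p q r : ℝ × ℝ) (h : ℝ × ℝ → ℝ) (hh : Measurable h) :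
    (threeAtoms a b p q r).map h =
      a • Measure.dirac (h p) + b • Measure.dirac (h q) + Measure.dirac (h r) := by
  unfold threeAtoms
  rw [Measure.map_add _ _ hh, Measure.map_add _ _ hh, Measure.map_smul, Measure.map_smul,
    Measure.map_dirac' hh, Measure.map_dirac' hh, Measure.map_dirac' hh]

lemma key (Γ : Set (ℝ × ℝ)) (c c' : ℝ → ℝ → ℝ) (hΓ : IsMinMonotonicitySet c c' Γ)
    (a b : NNReal) (hab : a + b = 1) (ym y yp x x' : ℝ)
    (hy : y = a * ym + b * yp)
    (h1 : (x, ym) ∈ Γ) (h2 : (x, yp) ∈ Γ) (h3 : (x', y) ∈ Γ) :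
    (a * c x ym + b * c x yp + c x' y ≤ a * c x' ym + b * c x' yp + c x y) ∧
    (a * c x ym + b * c x yp + c x' y = a * c x' ym + b * c x' yp + c x y →
      a * c' x' ym + b * c' x' yp + c' x y ≤ a * c' x ym + b * c' x yp + c' x' y) := by
  have hab' : (a : ℝ) + b = 1 := by exact_mod_cast hab
  have := hΓ (threeAtoms a b (x, ym) (x, yp) (x', y)) (by unfold threeAtoms; infer_instance)
    ⟨{(x, ym), (x, yp), (x', y)}, by
      intro z hz
      simp only [Finset.coe_insert, Finset.coe_singleton, Set.mem_insert_iff,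
        Set.mem_singleton_iff] at hz
      rcases hz with rfl | rfl | rfl <;> assumption, threeAtoms_supp _ _ _ _ _⟩
    (threeAtoms a b (x', ym) (x', yp) (x, y))
    ⟨⟨_, threeAtoms_supp _ _ _ _ _⟩, by
      rw [threeAtoms_map _ _ _ _ _ _ measurable_fst, threeAtoms_map _ _ _ _ _ _ measurable_fst]
      simp only [← add_smul, hab, one_smul]
      exact add_comm _ _, by
      rw [threeAtoms_map _ _ _ _ _ _ measurable_snd, threeAtoms_map _ _ _ _ _ _ measurable_snd],
      by
      intro t
      have hm : MeasurableSet {p : ℝ × ℝ | p.1 = t} :=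
        measurable_fst (measurableSet_singleton t)
      rw [← integral_indicator hm, ← integral_indicator hm, threeAtoms_integral,
        threeAtoms_integral]
      by_cases e : x = t <;> by_cases e' : x' = t <;>
        simp [Set.indicator, e, e'] <;> linarith⟩
  simpa only [threeAtoms_integral] using this

/-- Lemma 7 (minimising case): forbidden configurations on the monotonicity set of
a minimising (and secondarily maximising) martingale transport for the cost
`c(x,y) = |x+y|` with secondary cost `c'(x,y) = |x+y|·y²`. -/
theorem min_variational_configurations
    (μ ν : Measure ℝ) [IsProbabilityMeasure μ] [IsProbabilityMeasure ν]
    (hconv : InConvexOrder μ ν)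
    (Γ : Set (ℝ × ℝ))
    (hΓ : IsMinMonotonicitySet (fun x y => |x + y|) (fun x y => |x + y| * y ^ 2) Γ)
    (ym y yp : ℝ) (hy1 : ym < y) (hy2 : y < yp)
    (lam : ℝ) (hlam : lam ∈ Set.Icc (0 : ℝ) 1)
    (hconvcomb : y = (1 - lam) * ym + lam * yp)
    (f g : ℝ → ℝ)
    (hf : f = fun t => (1 - lam) * |t + ym| + lam * |t + yp| - |t + y|)
    (hg : g = fun t =>
      (1 - lam) * |t + ym| * ym ^ 2 + lam * |t + yp| * yp ^ 2 - |t + y| * y ^ 2) :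
    (¬ ∃ x x' : ℝ, (x, ym) ∈ Γ ∧ (x, yp) ∈ Γ ∧ (x', y) ∈ Γ ∧ f x' < f x) ∧
    (¬ ∃ x x' : ℝ, (x, ym) ∈ Γ ∧ (x, yp) ∈ Γ ∧ (x', y) ∈ Γ ∧
      f x = f x' ∧ g x < g x') := by
  have main : ∀ x x' : ℝ, (x, ym) ∈ Γ → (x, yp) ∈ Γ → (x', y) ∈ Γ →
      f x ≤ f x' ∧ (f x = f x' → g x' ≤ g x) := by
    intro x x' h1 h2 h3
    obtain ⟨hl0, hl1⟩ := hlam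
    obtain ⟨a, ha⟩ : ∃ a : NNReal, (a : ℝ) = 1 - lam := ⟨⟨1 - lam, by linarith⟩, rfl⟩
    obtain ⟨b, hb⟩ : ∃ b : NNReal, (b : ℝ) = lam := ⟨⟨lam, hl0⟩, rfl⟩
    have hab : a + b = 1 := by
      apply NNReal.coe_injective
      rw [NNReal.coe_add, ha, hb, NNReal.coe_one]
      ring
    have := key Γ _ _ hΓ a b hab ym y yp x x' (by rw [ha, hb]; exact hconvcomb) h1 h2 h3
    simp only [ha, hb] at this
    obtain ⟨k1, k2⟩ := this
    subst hf hg
    refine ⟨by dsimp only; linarith, fun e => ?_⟩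
    dsimp only at e ⊢
    have := k2 (by linarith)
    linarith
  refine ⟨?_, ?_⟩
  · rintro ⟨x, x', h1, h2, h3, h⟩
    exact absurd (main x x' h1 h2 h3).1 (not_le.mpr h)
  · rintro ⟨x, x', h1, h2, h3, e, h⟩
    exact absurd ((main x x' h1 h2 h3).2 e) (not_le.mpr h)
end
end

section
/- Let μ ⪯ ν be probability measures on ℝ in convex order with supp(μ) ⊆ [0,∞), and let Γ ⊆ ℝ² be a minimising monotonicity set for the pair of cost functions c(x,y) := |x+y| and c'(x,y) := |x+y|y². Suppose (x,y⁺), (x,y⁻), (x',y') ∈ Γ with y⁻ < −x < y⁺ and y⁻ < y' < y⁺. Then it cannot be that (i) −x < y' and x < x', and it cannot be that (ii) y' < −x and x' < x. -/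
open MeasureTheory

noncomputable section

/-- Three-atom measure. -/
def atoms3 (a b c : ℝ) (p q r : ℝ × ℝ) : Measure (ℝ × ℝ) :=
  ENNReal.ofReal a • Measure.dirac p + ENNReal.ofReal b • Measure.dirac q +
    ENNReal.ofReal c • Measure.dirac r

lemma integral_atoms3 {a b c : ℝ} (ha : 0 ≤ a) (hb : 0 ≤ b) (hc : 0 ≤ c) (p q r : ℝ × ℝ)
    (f : ℝ × ℝ → ℝ) : ∫ z, f z ∂(atoms3 a b c p q r) = a * f p + b * f q + c * f r := by
  have hi : ∀ (t : ℝ) (z : ℝ × ℝ), Integrable f (ENNReal.ofReal t • Measure.dirac z) :=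
    fun t z => (integrable_dirac (by simp)).smul_measure ENNReal.ofReal_ne_top
  unfold atoms3
  rw [integral_add_measure ((hi _ _).add_measure (hi _ _)) (hi _ _),
    integral_add_measure (hi _ _) (hi _ _)]
  simp [integral_smul_measure, integral_dirac, ENNReal.toReal_ofReal, ha, hb, hc]

lemma atoms3_compl (a b c : ℝ) (p q r : ℝ × ℝ) :
    atoms3 a b c p q r ((↑({p, q, r} : Finset (ℝ × ℝ)) : Set (ℝ × ℝ))ᶜ) = 0 := by
  simp [atoms3]

lemma key_s7 {Γ : Set (ℝ × ℝ)}
    (hΓ : IsMinMonotonicitySet (fun x y => |x + y|) (fun x y => |x + y| * y ^ 2) Γ)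
    {x x' ym yp y' : ℝ}
    (hp : (x, yp) ∈ Γ) (hm : (x, ym) ∈ Γ) (h' : (x', y') ∈ Γ)
    (h3 : ym < y') (h4 : y' < yp) (hx : x ≠ x') :
    (y' - ym) * |x + yp| + (yp - y') * |x + ym| + (yp - ym) * |x' + y'| ≤
    (y' - ym) * |x' + yp| + (yp - y') * |x' + ym| + (yp - ym) * |x + y'| := by
  have ha : 0 ≤ y' - ym := by linarith
  have hb : 0 ≤ yp - y' := by linarith
  have hc : 0 ≤ yp - ym := by linarith
  have hsum : ENNReal.ofReal (yp - ym) = ENNReal.ofReal (y' - ym) + ENNReal.ofReal (yp - y') := by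
    rw [← ENNReal.ofReal_add ha hb]; congr 1; ring
  have H := (hΓ (atoms3 (y' - ym) (yp - y') (yp - ym) (x, yp) (x, ym) (x', y'))
    ⟨by simp [atoms3, ENNReal.add_lt_top]⟩
    ⟨_, by
      intro z hz
      simp only [Finset.coe_insert, Finset.coe_singleton, Set.mem_insert_iff,
        Set.mem_singleton_iff] at hz
      rcases hz with rfl | rfl | rfl <;> assumption, atoms3_compl _ _ _ _ _ _⟩
    (atoms3 (y' - ym) (yp - y') (yp - ym) (x', yp) (x', ym) (x, y'))
    ⟨⟨_, atoms3_compl _ _ _ _ _ _⟩, ?_, ?_, ?_⟩).1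
  · simpa only [integral_atoms3 ha hb hc] using H
  · simp only [atoms3, Measure.map_add _ _ measurable_fst, Measure.map_smul,
      Measure.map_dirac' measurable_fst, hsum, add_smul]
    abel
  · simp only [atoms3, Measure.map_add _ _ measurable_snd, Measure.map_smul,
      Measure.map_dirac' measurable_snd]
  · intro t
    have hms : MeasurableSet {p : ℝ × ℝ | p.1 = t} :=
      measurableSet_eq_fun measurable_fst measurable_const
    rw [← integral_indicator hms, ← integral_indicator hms, integral_atoms3 ha hb hc,
      integral_atoms3 ha hb hc]
    simp only [Set.indicator_apply, Set.mem_ofPred_eq]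
    by_cases e1 : x = t <;> by_cases e2 : x' = t
    · exact absurd (e1.trans e2.symm) hx
    all_goals simp only [e1, e2, if_true, if_false]; try ring

/-- Corollary 8 (minimising case): on the monotonicity set of a minimising
(and secondarily maximising) martingale transport for `c(x,y) = |x+y|`,
`c'(x,y) = |x+y|·y²`, with `supp μ ⊆ [0,∞)`: if `(x,y⁺), (x,y⁻), (x',y') ∈ Γ`
with `y⁻ < -x < y⁺` and `y⁻ < y' < y⁺`, then neither
(i) `-x < y'` and `x < x'`, nor (ii) `y' < -x` and `x' < x` can hold. -/
theorem min_forbidden_configurations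
    (μ ν : Measure ℝ) [IsProbabilityMeasure μ] [IsProbabilityMeasure ν]
    (hconv : InConvexOrder μ ν)
    (hsupp : μ (Set.Iio 0) = 0)
    (Γ : Set (ℝ × ℝ))
    (hΓ : IsMinMonotonicitySet (fun x y => |x + y|) (fun x y => |x + y| * y ^ 2) Γ)
    (x x' ym yp y' : ℝ)
    (hp : (x, yp) ∈ Γ) (hm : (x, ym) ∈ Γ) (h' : (x', y') ∈ Γ)
    (h1 : ym < -x) (h2 : -x < yp) (h3 : ym < y') (h4 : y' < yp) :
    ¬(-x < y' ∧ x < x') ∧ ¬(y' < -x ∧ x' < x) := by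
  constructor
  · rintro ⟨h5, h6⟩
    have H := key_s7 hΓ hp hm h' h3 h4 h6.ne
    rw [abs_of_pos (by linarith : 0 < x + yp), abs_of_neg (by linarith : x + ym < 0),
      abs_of_pos (by linarith : 0 < x' + y'), abs_of_pos (by linarith : 0 < x' + yp),
      abs_of_pos (by linarith : 0 < x + y')] at H
    have : |x' + ym| < 2 * (x' - x) - (x' + ym) := by
      rw [abs_lt]; constructor <;> linarith
    nlinarith [mul_pos (sub_pos.2 h4) (sub_pos.2 this)]
  · rintro ⟨h5, h6⟩
    have H := key_s7 hΓ hp hm h' h3 h4 h6.ne'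
    rw [abs_of_pos (by linarith : 0 < x + yp), abs_of_neg (by linarith : x + ym < 0),
      abs_of_neg (by linarith : x' + y' < 0), abs_of_neg (by linarith : x' + ym < 0),
      abs_of_neg (by linarith : x + y' < 0)] at H
    have : |x' + yp| < 2 * (x - x') + (x' + yp) := by
      rw [abs_lt]; constructor <;> linarith
    nlinarith [mul_pos (sub_pos.2 h3) (sub_pos.2 this)]
end
end

section
/- Let μ ⪯ ν be probability measures on ℝ in convex order with supp(μ) ⊆ [0,∞), and let Γ ⊆ ℝ² be a maximising monotonicity set for the pair of cost functions c(x,y) := |x+y| and c'(x,y) := |x+y|y². Suppose (x,y⁺), (x,y⁻), (x',y') ∈ Γ with y⁻ < −x' < y⁺ and y⁻ < y' < y⁺. Then it cannot be that (i) y' ≤ −x' and x < x', and it cannot be that (ii) −x' ≤ y' and x' < x. -/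
open MeasureTheory

noncomputable section

/-- Three weighted Dirac masses. -/
def tri (a b c : ℝ) (p q r : ℝ × ℝ) : Measure (ℝ × ℝ) :=
  ENNReal.ofReal a • Measure.dirac p + ENNReal.ofReal b • Measure.dirac q
    + ENNReal.ofReal c • Measure.dirac r

lemma tri_finite (a b c : ℝ) (p q r : ℝ × ℝ) : IsFiniteMeasure (tri a b c p q r) := by
  have h (t : ℝ) (z : ℝ × ℝ) : IsFiniteMeasure (ENNReal.ofReal t • Measure.dirac z) :=
    Measure.smul_finite _ ENNReal.ofReal_ne_top
  have := h a p
  have := h b q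
  have := h c r
  unfold tri
  infer_instance

lemma tri_compl (a b c : ℝ) (p q r : ℝ × ℝ) :
    tri a b c p q r ((↑({p, q, r} : Finset (ℝ × ℝ)) : Set (ℝ × ℝ))ᶜ) = 0 := by
  simp [tri]

lemma tri_integral {a b c : ℝ} (ha : 0 ≤ a) (hb : 0 ≤ b) (hc : 0 ≤ c) (p q r : ℝ × ℝ)
    (f : ℝ × ℝ → ℝ) : ∫ z, f z ∂(tri a b c p q r) = a * f p + b * f q + c * f r := by
  have h (t : ℝ) (z : ℝ × ℝ) : Integrable f (ENNReal.ofReal t • Measure.dirac z) :=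
    (integrable_dirac (by simp)).smul_measure ENNReal.ofReal_ne_top
  unfold tri
  rw [integral_add_measure ((h a p).add_measure (h b q)) (h c r),
    integral_add_measure (h a p) (h b q)]
  simp [integral_smul_measure, ENNReal.toReal_ofReal, ha, hb, hc]

lemma tri_map {a b c : ℝ} (p q r : ℝ × ℝ) (f : ℝ × ℝ → ℝ) (hf : Measurable f) :
    (tri a b c p q r).map f = ENNReal.ofReal a • Measure.dirac (f p)
      + ENNReal.ofReal b • Measure.dirac (f q) + ENNReal.ofReal c • Measure.dirac (f r) := by
  unfold tri
  rw [Measure.map_add _ _ hf, Measure.map_add _ _ hf]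
  simp [Measure.map_smul, Measure.map_dirac' hf]

lemma tri_competitor {a b c x x' ym yp y' : ℝ} (ha : 0 ≤ a) (hb : 0 ≤ b) (hc : a + b = c)
    (hy : a * yp + b * ym = c * y') :
    IsCompetitor (tri a b c (x, yp) (x, ym) (x', y'))
      (tri a b c (x', yp) (x', ym) (x, y')) := by
  refine ⟨⟨_, tri_compl _ _ _ _ _ _⟩, ?_, ?_, ?_⟩
  · rw [tri_map _ _ _ _ measurable_fst, tri_map _ _ _ _ measurable_fst, ← hc,
      ENNReal.ofReal_add ha hb]
    simp only [add_smul]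
    abel
  · rw [tri_map _ _ _ _ measurable_snd, tri_map _ _ _ _ measurable_snd]
  · intro z
    have hm : MeasurableSet {p : ℝ × ℝ | p.1 = z} :=
      measurable_fst (measurableSet_singleton z)
    have hc0 : 0 ≤ c := by linarith
    rw [← integral_indicator hm, ← integral_indicator hm, tri_integral ha hb hc0,
      tri_integral ha hb hc0]
    simp only [Set.indicator, Set.mem_ofPred_eq]
    split_ifs <;> linarith

/-- Corollary (maximising case): on the monotonicity set of a maximising
(and secondarily minimising) martingale transport for `c(x,y) = |x+y|`,
`c'(x,y) = |x+y|·y²`, with `supp μ ⊆ [0,∞)`: if `(x,y⁺), (x,y⁻), (x',y') ∈ Γ`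
with `y⁻ < -x' < y⁺` and `y⁻ < y' < y⁺`, then neither
(i) `y' ≤ -x'` and `x < x'`, nor (ii) `-x' ≤ y'` and `x' < x` can hold. -/
theorem max_forbidden_configurations
    (μ ν : Measure ℝ) [IsProbabilityMeasure μ] [IsProbabilityMeasure ν]
    (hconv : InConvexOrder μ ν)
    (hsupp : μ (Set.Iio 0) = 0)
    (Γ : Set (ℝ × ℝ))
    (hΓ : IsMaxMonotonicitySet (fun x y => |x + y|) (fun x y => |x + y| * y ^ 2) Γ)
    (x x' ym yp y' : ℝ)
    (hp : (x, yp) ∈ Γ) (hm : (x, ym) ∈ Γ) (h' : (x', y') ∈ Γ)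
    (h1 : ym < -x') (h2 : -x' < yp) (h3 : ym < y') (h4 : y' < yp) :
    ¬(y' ≤ -x' ∧ x < x') ∧ ¬(-x' ≤ y' ∧ x' < x) := by
  have key := (hΓ _ (tri_finite (y' - ym) (yp - y') (yp - ym) (x, yp) (x, ym) (x', y'))
    ⟨_, by
      intro z hz
      simp only [Finset.coe_insert, Finset.coe_singleton, Set.mem_insert_iff,
        Set.mem_singleton_iff] at hz
      rcases hz with rfl | rfl | rfl <;> assumption, tri_compl _ _ _ _ _ _⟩ _
    (tri_competitor (by linarith) (by linarith) (by ring) (by ring))).1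
  rw [tri_integral (by linarith) (by linarith) (by linarith),
    tri_integral (by linarith) (by linarith) (by linarith)] at key
  simp only at key
  rw [abs_of_pos (show 0 < x' + yp by linarith), abs_of_neg (show x' + ym < 0 by linarith)] at key
  constructor
  · rintro ⟨h5, h6⟩
    rw [abs_of_nonpos (show x' + y' ≤ 0 by linarith), abs_of_neg (show x + y' < 0 by linarith),
      abs_of_neg (show x + ym < 0 by linarith)] at key
    rcases abs_cases (x + yp) with ⟨h, _⟩ | ⟨h, _⟩ <;> rw [h] at key <;> 
      nlinarith [mul_pos (sub_pos.2 h3) (sub_pos.2 h6), mul_pos (sub_pos.2 h3) (sub_pos.2 h2)]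
  · rintro ⟨h5, h6⟩
    rw [abs_of_nonneg (show 0 ≤ x' + y' by linarith), abs_of_pos (show 0 < x + y' by linarith),
      abs_of_pos (show 0 < x + yp by linarith)] at key
    rcases abs_cases (x + ym) with ⟨h, _⟩ | ⟨h, _⟩ <;> rw [h] at key <;> 
      nlinarith [mul_pos (sub_pos.2 h4) (sub_pos.2 h6), mul_pos (sub_pos.2 h4) (sub_pos.2 h1)]
end
end
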